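/- arXiv:1603.07061 — 3 statements merged into one kernel-verified Lean document; each statement's English description precedes it below -/
import Mathlib

section
/- A priori C¹ bound for the Euler–Weil–Petersson equation: there exists an absolute constant C > 0 such that, for every T ∈ (0,∞] and every smooth u : [0,T) × S¹ → ℝ whose Fourier coefficients in θ at the modes n = 0, 1, −1 vanish for each t, and such that ω := −H(∂³_θ u + ∂_θ u) satisfies ∂_t ω + u ∂_θ ω + 2 (∂_θ u) ω = 0 pointwise on [0,T) × S¹, one has for all t ∈ [0,T): sup_θ |∂_θ u(t,θ)| ≤ sup_θ |∂_θ u(0,θ)| + C·E₀·t, where E₀ = ∫_{S¹} H(u(0,·))(θ) · (∂³_θ u(0,θ) + ∂_θ u(0,θ)) dθ. -/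
open MeasureTheory Real

/-- The `n`-th Fourier coefficient of a `2π`-periodic function `f : ℝ → ℝ`. -/
noncomputable def fourierC (f : ℝ → ℝ) (n : ℤ) : ℂ :=
  (1 / (2 * π)) * ∫ θ in (0:ℝ)..(2 * π), (f θ : ℂ) * Complex.exp (-Complex.I * (n : ℂ) * (θ : ℂ))

/-- The Hilbert transform on the circle, sending `Σ cₙ e^{inθ}` to `Σ (−i sgn n) cₙ e^{inθ}`. -/
noncomputable def hilbertT (f : ℝ → ℝ) (θ : ℝ) : ℝ :=
  (∑' n : ℤ, -Complex.I * ((n.sign : ℤ) : ℂ) * fourierC f n *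
    Complex.exp (Complex.I * (n : ℂ) * (θ : ℂ))).re

namespace EWP

open Complex (I)
open scoped ContDiff Topology

/-- continuous `2π`-periodic -/
def CP (f : ℝ → ℝ) : Prop := Continuous f ∧ ∀ θ, f (θ + 2 * π) = f θ

/-- smooth `2π`-periodic -/
def SP (f : ℝ → ℝ) : Prop := ContDiff ℝ ∞ f ∧ ∀ θ, f (θ + 2 * π) = f θ

lemma SP.cp {f : ℝ → ℝ} (h : SP f) : CP f := ⟨h.1.continuous, h.2⟩

lemma SP.deriv {f : ℝ → ℝ} (h : SP f) : SP (deriv f) := by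
  refine ⟨(contDiff_infty_iff_deriv.1 h.1).2, fun θ => ?_⟩
  have : (fun x => f (x + 2 * π)) = f := funext h.2
  rw [← deriv_comp_add_const, this]

lemma SP.hasDerivAt {f : ℝ → ℝ} (h : SP f) (x : ℝ) : HasDerivAt f (_root_.deriv f x) x :=
  ((contDiff_infty_iff_deriv.1 h.1).1 x).hasDerivAt

lemma SP.add {f g : ℝ → ℝ} (hf : SP f) (hg : SP g) : SP (fun x => f x + g x) :=
  ⟨hf.1.add hg.1, fun θ => by simp [hf.2, hg.2]⟩

lemma CP.add {f g : ℝ → ℝ} (hf : CP f) (hg : CP g) : CP (fun x => f x + g x) :=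
  ⟨hf.1.add hg.1, fun θ => by simp [hf.2, hg.2]⟩

lemma CP.mul {f g : ℝ → ℝ} (hf : CP f) (hg : CP g) : CP (fun x => f x * g x) :=
  ⟨hf.1.mul hg.1, fun θ => by simp [hf.2, hg.2]⟩

lemma norm_e (n : ℤ) (θ : ℝ) : ‖Complex.exp (I * n * θ)‖ = 1 := by
  have : I * n * θ = ((n * θ : ℝ) : ℂ) * I := by push_cast; ring
  rw [this, Complex.norm_exp_ofReal_mul_I]

lemma norm_e' (n : ℤ) (θ : ℝ) : ‖Complex.exp (-I * n * θ)‖ = 1 := by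
  have : -I * n * θ = ((-n * θ : ℝ) : ℂ) * I := by push_cast; ring
  rw [this, Complex.norm_exp_ofReal_mul_I]

lemma e_period (n : ℤ) (θ : ℝ) :
    Complex.exp (I * n * ((θ + 2 * π : ℝ) : ℂ)) = Complex.exp (I * n * θ) := by
  rw [Complex.exp_eq_exp_iff_exists_int]
  exact ⟨n, by push_cast; ring⟩

lemma cont_e (n : ℤ) : Continuous (fun θ : ℝ => Complex.exp (I * n * θ)) := by fun_prop
lemma cont_e' (n : ℤ) : Continuous (fun θ : ℝ => Complex.exp (-I * n * θ)) := by fun_prop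

lemma fourierC_bound {f : ℝ → ℝ} {B : ℝ} (h : ∀ θ ∈ Set.Icc 0 (2 * π), |f θ| ≤ B) (n : ℤ) :
    ‖fourierC f n‖ ≤ B := by
  unfold fourierC
  have h1 : ‖∫ θ in (0:ℝ)..(2 * π), (f θ : ℂ) * Complex.exp (-I * (n : ℂ) * (θ : ℂ))‖
      ≤ B * |2 * π - 0| := by
    apply intervalIntegral.norm_integral_le_of_norm_le_const
    intro θ hθ
    rw [Set.uIoc_of_le (by positivity)] at hθ
    rw [norm_mul, norm_e', mul_one, Complex.norm_real]
    exact h θ ⟨hθ.1.le, hθ.2⟩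
  rw [norm_mul]
  have h2 : ‖(1 / (2 * π) : ℂ)‖ = 1 / (2 * π) := by
    rw [show (1 / (2 * π) : ℂ) = ((1 / (2 * π) : ℝ) : ℂ) by push_cast; rfl, Complex.norm_real]
    exact abs_of_pos (by positivity)
  rw [h2]
  rw [sub_zero, abs_of_pos (by positivity)] at h1
  calc _ ≤ 1 / (2 * π) * (B * (2 * π)) := by gcongr
    _ = B := by field_simp

lemma fourierC_neg (f : ℝ → ℝ) (n : ℤ) : fourierC f (-n) = (starRingEnd ℂ) (fourierC f n) := by
  unfold fourierC
  rw [map_mul]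
  congr 1
  · rw [show (1 / (2 * π) : ℂ) = ((1 / (2 * π) : ℝ) : ℂ) by push_cast; rfl, Complex.conj_ofReal]
  · rw [intervalIntegral.intervalIntegral_eq_integral_uIoc,
      intervalIntegral.intervalIntegral_eq_integral_uIoc, Complex.real_smul, Complex.real_smul,
      map_mul, Complex.conj_ofReal, ← integral_conj]
    congr 2
    ext θ
    rw [map_mul, Complex.conj_ofReal, ← Complex.exp_conj]
    simp

lemma intable {f : ℝ → ℝ} (hf : Continuous f) (n : ℤ) (a b : ℝ) :
    IntervalIntegrable (fun θ : ℝ => (f θ : ℂ) * Complex.exp (-I * (n : ℂ) * (θ : ℂ)))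
      volume a b := by
  apply Continuous.intervalIntegrable
  fun_prop

lemma fourierC_add {f g : ℝ → ℝ} (hf : Continuous f) (hg : Continuous g) (n : ℤ) :
    fourierC (fun x => f x + g x) n = fourierC f n + fourierC g n := by
  unfold fourierC
  rw [← mul_add, ← intervalIntegral.integral_add (intable hf n _ _) (intable hg n _ _)]
  congr 2; ext θ; push_cast; ring

lemma fourierC_smul (f : ℝ → ℝ) (c : ℝ) (n : ℤ) :
    fourierC (fun x => c * f x) n = c * fourierC f n := by
  unfold fourierC
  have : ∫ θ in (0:ℝ)..(2 * π), ((c * f θ : ℝ) : ℂ) * Complex.exp (-I * (n : ℂ) * (θ : ℂ)) =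
      c * ∫ θ in (0:ℝ)..(2 * π), (f θ : ℂ) * Complex.exp (-I * (n : ℂ) * (θ : ℂ)) := by
    rw [← intervalIntegral.integral_const_mul]
    congr 1; ext θ; push_cast; ring
  rw [this]; ring

lemma fourierC_neg' (f : ℝ → ℝ) (n : ℤ) :
    fourierC (fun x => - f x) n = - fourierC f n := by
  have := fourierC_smul f (-1) n
  simpa using this

lemma fourierC_deriv' {f f' : ℝ → ℝ} (hf : CP f) (hf' : Continuous f')
    (hd : ∀ x, HasDerivAt f (f' x) x) (n : ℤ) :
    fourierC f' n = I * n * fourierC f n := by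
  unfold fourierC
  have h := intervalIntegral.integral_mul_deriv_eq_deriv_mul (a := 0) (b := 2 * π)
    (u := fun θ : ℝ => Complex.exp (-I * (n : ℂ) * (θ : ℂ)))
    (u' := fun θ : ℝ => Complex.exp (-I * (n : ℂ) * (θ : ℂ)) * (-I * n))
    (v := fun θ : ℝ => (f θ : ℂ)) (v' := fun θ : ℝ => (f' θ : ℂ))
    (fun x _ => by
      have := ((Complex.ofRealCLM.hasDerivAt (x := x)).const_mul (-I * (n : ℂ))).cexp
      simpa using this)
    (fun x _ => (hd x).ofReal_comp)
    (by apply Continuous.intervalIntegrable; fun_prop)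
    (by apply Continuous.intervalIntegrable; fun_prop)
  have h0 : f (2 * π) = f 0 := by have := hf.2 0; simpa using this
  have h1 : Complex.exp (-I * (n : ℂ) * ((2 * π : ℝ) : ℂ)) = 1 := by
    rw [Complex.exp_eq_one_iff]; exact ⟨-n, by push_cast; ring⟩
  simp only [h0, h1, Complex.ofReal_zero, mul_zero, Complex.exp_zero, sub_self, zero_sub] at h
  have e1 : ∫ θ in (0:ℝ)..(2 * π), (f' θ : ℂ) * Complex.exp (-I * (n : ℂ) * (θ : ℂ)) =
    ∫ θ in (0:ℝ)..(2 * π), Complex.exp (-I * (n : ℂ) * (θ : ℂ)) * (f' θ : ℂ) := by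
    congr 1; ext θ; ring
  have e2 : ∫ θ in (0:ℝ)..(2 * π), Complex.exp (-I * (n : ℂ) * (θ : ℂ)) * (-I * n) * (f θ : ℂ) =
    (-I * n) * ∫ θ in (0:ℝ)..(2 * π), (f θ : ℂ) * Complex.exp (-I * (n : ℂ) * (θ : ℂ)) := by
    rw [← intervalIntegral.integral_const_mul]
    congr 1; ext θ; ring
  rw [e1, h, e2]; ring

lemma SP.fourierC_deriv {f : ℝ → ℝ} (hf : SP f) (n : ℤ) :
    fourierC (_root_.deriv f) n = I * n * fourierC f n :=
  fourierC_deriv' hf.cp hf.deriv.1.continuous hf.hasDerivAt n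

lemma SP.iter {f : ℝ → ℝ} (hf : SP f) (k : ℕ) : SP (_root_.deriv^[k] f) := by
  induction k with
  | zero => exact hf
  | succ k ih => rw [Function.iterate_succ_apply']; exact ih.deriv

lemma SP.fourierC_iter {f : ℝ → ℝ} (hf : SP f) (k : ℕ) (n : ℤ) :
    fourierC (_root_.deriv^[k] f) n = (I * n) ^ k * fourierC f n := by
  induction k with
  | zero => simp
  | succ k ih =>
    rw [Function.iterate_succ_apply', (hf.iter k).fourierC_deriv, ih]; ring

lemma SP.decay {f : ℝ → ℝ} (hf : SP f) (k : ℕ) {B : ℝ}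
    (h : ∀ θ ∈ Set.Icc 0 (2 * π), |_root_.deriv^[k] f θ| ≤ B) (n : ℤ) :
    |(n : ℝ)| ^ k * ‖fourierC f n‖ ≤ B := by
  have := fourierC_bound h n
  rw [hf.fourierC_iter, norm_mul, norm_pow, norm_mul, Complex.norm_I, one_mul,
    Complex.norm_intCast] at this
  exact this

lemma SP.bdd {f : ℝ → ℝ} (hf : CP f) : ∃ B, 0 ≤ B ∧ ∀ θ, |f θ| ≤ B := by
  obtain ⟨B, hB⟩ := isCompact_Icc (a := (0:ℝ)) (b := 2 * π) |>.exists_bound_of_continuousOn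
    hf.1.continuousOn
  have hp : Function.Periodic f (2 * π) := hf.2
  refine ⟨B, (norm_nonneg _).trans (hB 0 ⟨le_rfl, by positivity⟩), fun θ => ?_⟩
  obtain ⟨y, hy, h⟩ := hp.exists_mem_Ico₀ (by positivity) θ
  rw [h]; exact hB y ⟨hy.1, hy.2.le⟩

lemma summable_of_decay {a : ℤ → ℝ} {B : ℝ} (ha : ∀ n, 0 ≤ a n)
    (h : ∀ n : ℤ, |(n : ℝ)| ^ 2 * a n ≤ B) : Summable a := by
  have h1 : Summable (fun n : ℤ => B * (1 / (n : ℝ) ^ 2)) :=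
    ((Real.summable_one_div_int_pow (p := 2)).2 (by norm_num)).mul_left B
  refine Summable.of_norm_bounded_eventually h1 ?_
  have : ({0} : Set ℤ)ᶜ ∈ Filter.cofinite := (Set.finite_singleton 0).compl_mem_cofinite
  filter_upwards [this] with n hn
  have hn : (n : ℝ) ≠ 0 := by simpa using hn
  rw [Real.norm_of_nonneg (ha n)]
  have := h n
  rw [sq_abs] at this
  rw [mul_one_div, le_div_iff₀ (by positivity)]
  linarith

lemma SP.summable {f : ℝ → ℝ} (hf : SP f) (k : ℕ) :
    Summable (fun n : ℤ => |(n : ℝ)| ^ k * ‖fourierC f n‖) := by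
  obtain ⟨B, _, hB⟩ := SP.bdd (hf.iter (k + 2)).cp
  refine summable_of_decay (B := B) (fun n => by positivity) fun n => ?_
  have := hf.decay (k + 2) (fun θ _ => hB θ) n
  rw [pow_add] at this
  linarith

lemma CP.hasSum {f : ℝ → ℝ} (hf : CP f) (hs : Summable (fourierC f)) (θ : ℝ) :
    HasSum (fun n : ℤ => fourierC f n * Complex.exp (I * n * θ)) (f θ : ℂ) := by
  have : Fact (0 < 2 * π) := ⟨by positivity⟩
  have hp : Function.Periodic (fun x => (f x : ℂ)) (2 * π) := fun x => by simp [hf.2]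
  let F : C(AddCircle (2 * π), ℂ) := ⟨hp.lift, by
    apply continuous_coinduced_dom.2
    exact Complex.continuous_ofReal.comp hf.1⟩
  have hF : ∀ x : ℝ, F (x : AddCircle (2 * π)) = f x := fun x => hp.lift_coe x
  have hpi : (π : ℂ) ≠ 0 := by exact_mod_cast Real.pi_ne_zero
  have hc : fourierCoeff F = fourierC f := by
    ext n
    rw [fourierCoeff_eq_intervalIntegral F n 0, zero_add]
    unfold fourierC
    rw [Complex.real_smul]
    push_cast
    congr 2
    ext x
    rw [hF, fourier_coe_apply, smul_eq_mul, mul_comm]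
    congr 2
    push_cast
    field_simp
  have := has_pointwise_sum_fourier_series_of_summable (f := F) (by rw [hc]; exact hs) (θ : AddCircle (2 * π))
  rw [hF, hc] at this
  refine this.congr_fun ?_ |> fun h => h
  intro n
  rw [fourier_coe_apply, smul_eq_mul]
  congr 2
  push_cast
  field_simp

/-- convolution -/
lemma conv {a : ℤ → ℂ} (ha : Summable (fun n => ‖a n‖)) {F g : ℝ → ℝ} (hg : Continuous g)
    (hF : ∀ θ : ℝ, HasSum (fun n : ℤ => a n * Complex.exp (I * n * θ)) (F θ : ℂ)) (n : ℤ) :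
    HasSum (fun j => a j * fourierC g (n - j)) (fourierC (fun x => F x * g x) n) := by
  obtain ⟨B, hB⟩ := (isCompact_uIcc (a := (0:ℝ)) (b := 2 * π)).exists_bound_of_continuousOn
    hg.continuousOn
  have key := intervalIntegral.hasSum_integral_of_dominated_convergence (μ := volume)
    (a := 0) (b := 2 * π)
    (F := fun (j : ℤ) (θ : ℝ) => a j * ((g θ : ℂ) * Complex.exp (-I * ((n - j : ℤ) : ℂ) * θ)))
    (f := fun θ : ℝ => ((F θ * g θ : ℝ) : ℂ) * Complex.exp (-I * n * θ))
    (fun j _ => ‖a j‖ * B)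
    (fun j => by apply Continuous.aestronglyMeasurable; fun_prop)
    (fun j => by
      filter_upwards with θ hθ
      rw [norm_mul, norm_mul, norm_e', mul_one, Complex.norm_real]
      gcongr
      exact hB θ (Set.uIoc_subset_uIcc hθ))
    (by filter_upwards with θ hθ; exact ha.mul_right B)
    (by simp)
    (by
      filter_upwards with θ hθ
      have := (hF θ).mul_right ((g θ : ℂ) * Complex.exp (-I * n * θ))
      rw [Complex.ofReal_mul, mul_assoc]
      refine this.congr_fun ?_ |> fun h => h
      intro j
      have : Complex.exp (-I * ((n - j : ℤ) : ℂ) * θ) =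
          Complex.exp (I * j * θ) * Complex.exp (-I * n * θ) := by
        rw [← Complex.exp_add]; congr 1; push_cast; ring
      rw [this]; ring)
  have := key.mul_left (1 / (2 * π) : ℂ)
  unfold fourierC
  refine this.congr_fun ?_ |> fun h => h
  intro j
  simp only [intervalIntegral.integral_const_mul]
  ring

lemma CP.conv {f g : ℝ → ℝ} (hf : CP f) (hs : Summable (fun n => ‖fourierC f n‖)) (hg : Continuous g)
    (n : ℤ) :
    HasSum (fun j => fourierC f j * fourierC g (n - j)) (fourierC (fun x => f x * g x) n) :=
  EWP.conv hs hg (fun θ => hf.hasSum hs.of_norm θ) n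

lemma fourierC_one (n : ℤ) : fourierC (fun _ => 1) n = if n = 0 then 1 else 0 := by
  have hpi : (π : ℂ) ≠ 0 := by exact_mod_cast Real.pi_ne_zero
  split_ifs with h
  · subst h
    simp [fourierC]
    field_simp
  · have := fourierC_deriv' (f := fun _ => (1:ℝ)) (f' := fun _ => 0) ⟨continuous_const, fun _ => rfl⟩
      continuous_const (fun x => hasDerivAt_const _ _) n
    have h0 : fourierC (fun _ => 0) n = 0 := by simp [fourierC]
    rw [h0] at this
    have hn : (I * n : ℂ) ≠ 0 := by
      refine mul_ne_zero Complex.I_ne_zero (by exact_mod_cast h)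
    exact (mul_eq_zero.1 this.symm).resolve_left hn

/-- Synthesis of a real function from Fourier coefficients. -/
noncomputable def synth (a : ℤ → ℂ) (θ : ℝ) : ℝ :=
  (∑' n : ℤ, a n * Complex.exp (I * (n : ℂ) * (θ : ℂ))).re

lemma hilbertT_eq (f : ℝ → ℝ) : hilbertT f = synth (fun n => -I * ((n.sign : ℤ) : ℂ) * fourierC f n) := rfl

lemma summ_e {a : ℤ → ℂ} (ha : Summable (fun n => ‖a n‖)) (θ : ℝ) :
    Summable (fun n : ℤ => a n * Complex.exp (I * (n : ℂ) * (θ : ℂ))) := by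
  apply Summable.of_norm
  simpa [norm_mul, norm_e] using ha

lemma synth_cp {a : ℤ → ℂ} (ha : Summable (fun n => ‖a n‖)) : CP (synth a) := by
  constructor
  · apply Complex.continuous_re.comp
    refine continuous_tsum (u := fun n => ‖a n‖) (fun n => by fun_prop) ha fun n θ => ?_
    rw [norm_mul, norm_e, mul_one]
  · intro θ
    unfold synth
    simp only [e_period]

lemma synth_hasSum {a : ℤ → ℂ} (ha : Summable (fun n => ‖a n‖))
    (hh : ∀ n, a (-n) = (starRingEnd ℂ) (a n)) (θ : ℝ) :
    HasSum (fun n : ℤ => a n * Complex.exp (I * n * θ)) (synth a θ : ℂ) := by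
  have h1 := (summ_e ha θ).hasSum
  have h2 : (starRingEnd ℂ) (∑' n : ℤ, a n * Complex.exp (I * n * θ)) =
      ∑' n : ℤ, a n * Complex.exp (I * n * θ) := by
    have h3 := Complex.hasSum_conj'.2 h1 
    rw [← (Equiv.neg ℤ).hasSum_iff] at h3
    refine h3.unique ?_ |> fun h => h
    refine h1.congr_fun ?_ |> fun h => h
    intro n
    simp only [Function.comp, Equiv.neg_apply, map_mul, hh, Complex.conj_conj, ← Complex.exp_conj]
    simp
  unfold synth
  rw [Complex.conj_eq_iff_re.1 h2]
  exact h1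

lemma fourierC_synth {a : ℤ → ℂ} (ha : Summable (fun n => ‖a n‖))
    (hh : ∀ n, a (-n) = (starRingEnd ℂ) (a n)) (n : ℤ) : fourierC (synth a) n = a n := by
  have := conv ha (g := fun _ => 1) continuous_const (synth_hasSum ha hh) n
  simp only [fourierC_one, mul_one] at this
  refine this.unique ?_ |> fun h => h
  have h2 := hasSum_single (f := fun j => a j * if n - j = 0 then 1 else 0) n (fun j hj => by
    rw [if_neg (by omega), mul_zero])
  simpa using h2

lemma synth_hasDerivAt {a : ℤ → ℂ} (ha : Summable (fun n => ‖a n‖))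
    (ha' : Summable (fun n : ℤ => |(n : ℝ)| * ‖a n‖)) (θ : ℝ) :
    HasDerivAt (synth a) (synth (fun n => I * n * a n) θ) θ := by
  have key := hasDerivAt_tsum (𝕜 := ℝ) (g := fun (n : ℤ) (θ : ℝ) => a n * Complex.exp (I * n * θ))
    (g' := fun (n : ℤ) (θ : ℝ) => I * n * a n * Complex.exp (I * n * θ)) ha'
    (fun n y => by
      have := (((Complex.ofRealCLM.hasDerivAt (x := y)).const_mul (I * (n : ℂ))).cexp).const_mul (a n)
      refine this.congr_deriv ?_
      simp; ring)
    (fun n y => by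
      rw [norm_mul, norm_e, mul_one, norm_mul, norm_mul, Complex.norm_I, one_mul, Complex.norm_intCast])
    (summ_e ha 0) θ
  have := (Complex.reCLM.hasFDerivAt.comp_hasDerivAt θ key)
  exact this

end EWP

namespace EWP
open Complex (I)
open scoped ContDiff Topology

/-- symbol of `-H(∂³+∂)` -/
noncomputable def lam (n : ℝ) : ℝ := |n| * (n ^ 2 - 1)

lemma lam_neg (n : ℝ) : lam (-n) = lam n := by simp [lam]

/-- unsymmetrised multiplier -/
noncomputable def mm (j k : ℝ) : ℝ :=
  (j + k) / lam (j + k) * ((k + 2 * j) * lam k) - k ^ 2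

lemma mm_neg (j k : ℝ) : mm (-j) (-k) = mm j k := by
  unfold mm
  rw [show -j + -k = -(j + k) by ring, lam_neg, lam_neg]
  ring

lemma sym_pp {j k : ℝ} (hj : 2 ≤ j) (hk : 2 ≤ k) :
    |mm j k + mm k j| ≤ 8 * (j ^ 2 * k ^ 2 / (j ^ 2 + k ^ 2)) := by
  have h1 : 0 < (j + k) ^ 2 - 1 := by nlinarith
  have e : mm j k + mm k j = - (2 * (j * k) * (j * k + 2) / ((j + k) ^ 2 - 1)) := by
    unfold mm lam
    rw [add_comm k j, abs_of_pos (by linarith : 0 < j + k), abs_of_pos (by linarith : 0 < j),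
      abs_of_pos (by linarith : 0 < k)]
    have : j + k ≠ 0 := by linarith
    field_simp
    ring
  rw [e, abs_neg, abs_of_nonneg (by positivity), ← mul_div_assoc]
  have hjk : 4 ≤ j * k := by nlinarith
  apply div_le_div₀
  · positivity
  · nlinarith
  · positivity
  · nlinarith

lemma sym_pn {j k : ℝ} (hj : 2 ≤ j) (hk : k ≤ -2) (hn : 2 ≤ j + k) :
    |mm j k + mm k j| ≤ 8 * (j ^ 2 * k ^ 2 / (j ^ 2 + k ^ 2)) := by
  have h1 : 0 < (j + k) ^ 2 - 1 := by nlinarith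
  have e : mm j k + mm k j = - (2 * k ^ 2) := by
    unfold mm lam
    rw [add_comm k j, abs_of_pos (by linarith : 0 < j + k), abs_of_pos (by linarith : 0 < j),
      abs_of_neg (by linarith : k < 0)]
    have : j + k ≠ 0 := by linarith
    field_simp
    ring
  rw [e, abs_neg, abs_of_nonneg (by positivity), ← mul_div_assoc, le_div_iff₀ (by positivity)]
  have : k ^ 2 ≤ j ^ 2 := by nlinarith
  nlinarith [mul_nonneg (sq_nonneg k) (sub_nonneg.2 this), mul_nonneg (sq_nonneg k) (sq_nonneg j)]

lemma sym_small {j k : ℤ} (hj : 2 ≤ |j|) (hk : 2 ≤ |k|) (hn : |j + k| ≤ 1) :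
    |mm j k + mm k j| ≤ 8 * ((j : ℝ) ^ 2 * (k : ℝ) ^ 2 / ((j : ℝ) ^ 2 + (k : ℝ) ^ 2)) := by
  have h0 : (((j:ℝ) + k)) / lam (j + k) = 0 := by
    have : j + k = 0 ∨ j + k = 1 ∨ j + k = -1 := by
      rcases abs_le.1 hn with ⟨h1, h2⟩; omega
    rcases this with h | h | h
    · have : (j : ℝ) + k = 0 := by exact_mod_cast h
      simp [this]
    · have : (j : ℝ) + k = 1 := by exact_mod_cast h
      simp [this, lam]
    · have : (j : ℝ) + k = -1 := by exact_mod_cast h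
      simp [this, lam]
  have e : mm j k + mm k j = - ((j : ℝ) ^ 2 + (k : ℝ) ^ 2) := by
    unfold mm
    rw [add_comm (k : ℝ) j, h0]; ring
  have hj2 : (2 : ℝ) ≤ |(j : ℝ)| := by exact_mod_cast hj
  have hk2 : (2 : ℝ) ≤ |(k : ℝ)| := by exact_mod_cast hk
  have hj4 : (4 : ℝ) ≤ (j : ℝ) ^ 2 := by rw [← sq_abs]; nlinarith
  have hk4 : (4 : ℝ) ≤ (k : ℝ) ^ 2 := by rw [← sq_abs]; nlinarith
  rw [e, abs_neg, abs_of_nonneg (by positivity), ← mul_div_assoc, le_div_iff₀ (by positivity)]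
  have hn' : |(j : ℝ) + k| ≤ 1 := by exact_mod_cast hn
  have hs : ((j : ℝ) + k) ^ 2 ≤ 1 := by rw [← sq_abs]; nlinarith [abs_nonneg ((j : ℝ) + k)]
  have hp : (0:ℝ) ≤ ((j:ℝ) - k) ^ 2 := sq_nonneg _
  -- p = jk, j²+k² ≤ 1 - 2p, p ≤ -3.5
  have h5 : (j : ℝ) ^ 2 + (k : ℝ) ^ 2 ≤ 1 - 2 * (j * k) := by nlinarith
  have h6 : (j : ℝ) * k ≤ -7 / 2 := by nlinarith
  have h7 : (0:ℝ) ≤ (j : ℝ) ^ 2 + (k : ℝ) ^ 2 := by positivity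
  have h8 : ((j : ℝ) ^ 2 + (k : ℝ) ^ 2) * ((j : ℝ) ^ 2 + (k : ℝ) ^ 2) ≤
    (1 - 2 * (j * k)) * (1 - 2 * (j * k)) := mul_le_mul h5 h5 h7 (h7.trans h5)
  nlinarith

lemma sym_bound {j k : ℤ} (hj : 2 ≤ |j|) (hk : 2 ≤ |k|) :
    |mm j k + mm k j| ≤ 8 * ((j : ℝ) ^ 2 * (k : ℝ) ^ 2 / ((j : ℝ) ^ 2 + (k : ℝ) ^ 2)) := by
  rcases le_or_gt (|j + k|) 1 with hn | hn
  · exact sym_small hj hk hn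
  have pn : ∀ {j k : ℤ}, 2 ≤ j → k ≤ -2 → 1 < |j + k| →
      |mm j k + mm k j| ≤ 8 * ((j : ℝ) ^ 2 * (k : ℝ) ^ 2 / ((j : ℝ) ^ 2 + (k : ℝ) ^ 2)) := by
    intro j k hj hk hn
    rcases lt_abs.1 hn with h | h
    · have h' : 2 ≤ j + k := by omega
      exact sym_pn (by exact_mod_cast hj) (by exact_mod_cast hk) (by exact_mod_cast h')
    · have h' : 2 ≤ -k + -j := by omega
      have hk' : 2 ≤ -k := by omega
      have hj' : -j ≤ -2 := by omega
      have := sym_pn (j := -(k:ℝ)) (k := -(j:ℝ)) (by exact_mod_cast hk') (by exact_mod_cast hj')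
        (by exact_mod_cast h')
      rw [mm_neg, mm_neg, add_comm, neg_sq, neg_sq, mul_comm ((k:ℝ) ^ 2), add_comm ((k : ℝ) ^ 2)] at this
      exact this
  rcases le_abs.1 hj with h1 | h1 <;> rcases le_abs.1 hk with h2 | h2
  · exact sym_pp (by exact_mod_cast h1) (by exact_mod_cast h2)
  · exact pn h1 (by omega) hn
  · have := pn h2 (by omega : j ≤ -2) (by rwa [add_comm])
    rw [add_comm, mul_comm ((k:ℝ) ^ 2), add_comm ((k : ℝ) ^ 2)] at this
    exact this
  · have := sym_pp (j := -(j:ℝ)) (k := -(k:ℝ)) (by exact_mod_cast h1) (by exact_mod_cast h2)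
    rw [mm_neg, mm_neg, neg_sq, neg_sq] at this
    exact this

lemma sum_range_bound {J : ℝ} (hJ : 1 ≤ J) (N : ℕ) :
    ∑ k ∈ Finset.range N, 1 / (J ^ 2 + (k : ℝ) ^ 2) ≤ 4 * (1 / J - 1 / (J + N)) := by
  induction N with
  | zero => simp
  | succ N ih =>
    rw [Finset.sum_range_succ]
    have hN : (0:ℝ) ≤ N := Nat.cast_nonneg N
    have : 1 / (J ^ 2 + (N : ℝ) ^ 2) ≤ 4 * (1 / (J + N) - 1 / (J + (N + 1 : ℕ))) := by
      push_cast
      have e : 4 * (1 / (J + N) - 1 / (J + (N + 1))) = 4 / ((J + N) * (J + N + 1)) := by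
        field_simp; ring
      rw [e, div_le_div_iff₀ (by positivity) (by positivity)]
      nlinarith [sq_nonneg (J - N)]
    linarith

lemma tsum_kernel {J : ℝ} (hJ : 1 ≤ |J|) :
    ∑' k : ℤ, ENNReal.ofReal (1 / (J ^ 2 + (k : ℝ) ^ 2)) ≤ ENNReal.ofReal (8 / |J|) := by
  have hnat : ∑' k : ℕ, ENNReal.ofReal (1 / (J ^ 2 + (k : ℝ) ^ 2)) ≤ ENNReal.ofReal (4 / |J|) := by
    apply ENNReal.tsum_le_of_sum_range_le
    intro N
    rw [← ENNReal.ofReal_sum_of_nonneg (fun i _ => by positivity)]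
    apply ENNReal.ofReal_le_ofReal
    have := sum_range_bound hJ N
    rw [sq_abs] at this
    refine this.trans ?_
    have : 0 ≤ 1 / (|J| + N) := by positivity
    have e : 4 / |J| = 4 * (1 / |J|) := by ring
    rw [e]; linarith
  rw [tsum_of_nat_of_neg_add_one ENNReal.summable ENNReal.summable]
  have e : ENNReal.ofReal (8 / |J|) = ENNReal.ofReal (4 / |J|) + ENNReal.ofReal (4 / |J|) := by
    rw [← ENNReal.ofReal_add (by positivity) (by positivity)]; congr 1; ring
  rw [e]
  refine add_le_add (by simpa using hnat) (le_trans ?_ hnat)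
  apply ENNReal.tsum_le_tsum
  intro k
  apply ENNReal.ofReal_le_ofReal
  have : (0:ℝ) ≤ k := Nat.cast_nonneg k
  have hJ2 : 0 < J ^ 2 := by rw [← sq_abs]; positivity
  push_cast
  apply one_div_le_one_div_of_le (by positivity)
  nlinarith

/-- the main `ℓ²` estimate -/
lemma D_bound {c : ℤ → ℂ} (hc : ∀ n : ℤ, |n| ≤ 1 → c n = 0)
    (hs : Summable (fun n : ℤ => lam n * ‖c n‖ ^ 2)) {D : ℤ → ℂ}
    (hD : ∀ n, HasSum (fun j : ℤ => (mm j ((n - j : ℤ) : ℝ) : ℂ) * (c j * c (n - j))) (D n)) :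
    Summable (fun n => ‖D n‖) ∧ ∑' n, ‖D n‖ ≤ 64 * ∑' n : ℤ, lam n * ‖c n‖ ^ 2 := by
  set q : ℤ → ℤ → ENNReal := fun j k =>
    ENNReal.ofReal (2 * (j : ℝ) ^ 4 * ‖c j‖ ^ 2 / ((j : ℝ) ^ 2 + (k : ℝ) ^ 2)) with hq
  have h1 : ∀ n, ‖D n‖ₑ ≤ ∑' j, (q j (n - j) + q (n - j) j) := by
    intro n
    have hA := hD n
    have hB := hD n
    rw [← (Equiv.subLeft n).hasSum_iff] at hB
    have hC := (hA.add hB).mul_left (1 / 2 : ℂ)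
    rw [show (1 / 2 : ℂ) * (D n + D n) = D n by ring] at hC
    rw [← hC.tsum_eq]
    refine (enorm_tsum_le_tsum_enorm).trans (ENNReal.tsum_le_tsum fun j => ?_)
    simp only [Function.comp, Equiv.subLeft_apply, sub_sub_cancel]
    set k := n - j with hk
    rw [← ofReal_norm, hq]
    dsimp only
    rw [← ENNReal.ofReal_add (by positivity) (by positivity)]
    apply ENNReal.ofReal_le_ofReal
    have e : (1 / 2 : ℂ) * ((mm j k : ℂ) * (c j * c k) + (mm k j : ℂ) * (c k * c j)) =
      (((1 / 2) * (mm j k + mm k j) : ℝ) : ℂ) * (c j * c k) := by push_cast; ring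
    rw [e, norm_mul, norm_mul, Complex.norm_real, Real.norm_eq_abs, abs_mul]
    rcases le_or_gt (|j|) 1 with hj | hj
    · rw [hc j hj]; simp; positivity
    rcases le_or_gt (|k|) 1 with hk1 | hk1
    · rw [hc k hk1]; simp; positivity
    have hb := sym_bound (j := j) (k := k) (by omega) (by omega)
    have hj0 : (j : ℝ) ≠ 0 := by
      have : j ≠ 0 := by rintro rfl; simp at hj
      exact_mod_cast this
    calc |(1 / 2 : ℝ)| * |mm j k + mm k j| * (‖c j‖ * ‖c k‖)
        ≤ |(1 / 2 : ℝ)| * (8 * ((j : ℝ) ^ 2 * (k : ℝ) ^ 2 / ((j : ℝ) ^ 2 + (k : ℝ) ^ 2))) * (‖c j‖ * ‖c k‖) := by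
          gcongr
      _ = (4 * (((j : ℝ) ^ 2 * ‖c j‖) * ((k : ℝ) ^ 2 * ‖c k‖))) / ((j : ℝ) ^ 2 + (k : ℝ) ^ 2) := by
          rw [abs_of_pos (by norm_num)]; ring
      _ ≤ (2 * (((j : ℝ) ^ 2 * ‖c j‖) ^ 2 + ((k : ℝ) ^ 2 * ‖c k‖) ^ 2)) / ((j : ℝ) ^ 2 + (k : ℝ) ^ 2) := by
          apply div_le_div_of_nonneg_right _ (by positivity)
          nlinarith [sq_nonneg (((j : ℝ) ^ 2 * ‖c j‖) - ((k : ℝ) ^ 2 * ‖c k‖))]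
      _ = _ := by rw [add_comm ((k:ℝ) ^ 2)]; ring
  have h2 : ∑' n, ‖D n‖ₑ ≤ ENNReal.ofReal (64 * ∑' n : ℤ, lam n * ‖c n‖ ^ 2) := by
    have lamnn : ∀ n : ℤ, 0 ≤ lam n * ‖c n‖ ^ 2 := by
      intro n
      rcases le_or_gt (|n|) 1 with hj | hj
      · rw [hc n hj]; simp
      · have : (1 : ℝ) < |(n : ℝ)| := by exact_mod_cast hj
        have : (1 : ℝ) ≤ (n : ℝ) ^ 2 := by rw [← sq_abs]; nlinarith
        unfold lam
        have := sub_nonneg.2 this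
        positivity
    have hqq : ∀ j, ∑' k, q j k ≤ ENNReal.ofReal (32 * (lam j * ‖c j‖ ^ 2)) := by
      intro j
      rcases le_or_gt (|j|) 1 with hj | hj
      · simp [hq, hc j hj]
      · have h1 : (2 : ℝ) ≤ |(j : ℝ)| := by
          have : 2 ≤ |j| := by omega
          exact_mod_cast this
        have e : ∀ k, q j k = ENNReal.ofReal (2 * (j : ℝ) ^ 4 * ‖c j‖ ^ 2) *
            ENNReal.ofReal (1 / ((j : ℝ) ^ 2 + (k : ℝ) ^ 2)) := by
          intro k
          rw [← ENNReal.ofReal_mul (by positivity)]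
          simp only [hq]; congr 1; ring
        simp only [e]
        rw [ENNReal.tsum_mul_left]
        refine (mul_le_mul_right (tsum_kernel (by linarith : 1 ≤ |(j:ℝ)|)) _).trans ?_
        rw [← ENNReal.ofReal_mul (by positivity)]
        apply ENNReal.ofReal_le_ofReal
        have e4 : (j : ℝ) ^ 4 = |(j : ℝ)| ^ 4 := by
          rw [show 4 = 2 * 2 from rfl, pow_mul, pow_mul, sq_abs]
        have e5 : 2 * (j : ℝ) ^ 4 * ‖c j‖ ^ 2 * (8 / |(j : ℝ)|) =
            16 * (|(j:ℝ)| * |(j : ℝ)| ^ 2) * ‖c j‖ ^ 2 := by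
          rw [e4]; field_simp; ring
        rw [e5]
        unfold lam
        have : 16 * (|(j:ℝ)| * |(j : ℝ)| ^ 2) ≤ 32 * (|(j : ℝ)| * ((j : ℝ) ^ 2 - 1)) := by
          rw [← sq_abs (j : ℝ)]
          have : 16 * |(j:ℝ)| ^ 2 ≤ 32 * (|(j : ℝ)| ^ 2 - 1) := by nlinarith
          nlinarith
        calc _ ≤ 32 * (|(j : ℝ)| * ((j : ℝ) ^ 2 - 1)) * ‖c j‖ ^ 2 := by gcongr
          _ = _ := by ring
    have hdd : ∑' n, ∑' j, q j (n - j) ≤ ENNReal.ofReal (32 * ∑' n : ℤ, lam n * ‖c n‖ ^ 2) := by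
      rw [ENNReal.tsum_comm]
      rw [← tsum_mul_left, ENNReal.ofReal_tsum_of_nonneg (fun n => by have := lamnn n; positivity)
        (hs.mul_left 32)]
      refine ENNReal.tsum_le_tsum fun j => ?_
      have := (Equiv.subRight j).tsum_eq (fun k => q j k)
      simp only [Equiv.subRight_apply] at this
      rw [this]
      exact hqq j
    calc ∑' n, ‖D n‖ₑ ≤ ∑' n, ∑' j, (q j (n - j) + q (n - j) j) := ENNReal.tsum_le_tsum h1
      _ = ∑' n, (∑' j, q j (n - j) + ∑' j, q (n - j) j) := by
          congr 1; ext n; exact ENNReal.tsum_add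
      _ = ∑' n, (∑' j, q j (n - j) + ∑' j, q j (n - j)) := by
          congr 1; ext n; congr 1
          rw [← (Equiv.subLeft n).tsum_eq (fun j => q j (n - j))]
          simp
      _ = ∑' n, ∑' j, q j (n - j) + ∑' n, ∑' j, q j (n - j) := ENNReal.tsum_add
      _ ≤ _ := by
          refine (add_le_add hdd hdd).trans ?_
          have : 0 ≤ ∑' n : ℤ, lam n * ‖c n‖ ^ 2 := tsum_nonneg lamnn
          rw [← ENNReal.ofReal_add (by positivity) (by positivity)]
          apply ENNReal.ofReal_le_ofReal
          linarith
  have hfin : ∑' n, ‖D n‖ₑ ≠ ⊤ := ne_top_of_le_ne_top ENNReal.ofReal_ne_top h2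
  have hsum : Summable (fun n => ‖D n‖) := by
    have := ENNReal.summable_toReal hfin
    simpa using this
  refine ⟨hsum, ?_⟩
  have h3 : ENNReal.ofReal (∑' n, ‖D n‖) ≤ ENNReal.ofReal (64 * ∑' n : ℤ, lam n * ‖c n‖ ^ 2) := by
    rw [ENNReal.ofReal_tsum_of_nonneg (fun n => norm_nonneg _) hsum]
    simpa [ofReal_norm] using h2
  rcases (ENNReal.ofReal_le_ofReal_iff').1 h3 with h | h
  · exact h
  · refine h.trans ?_
    have : 0 ≤ ∑' n : ℤ, lam n * ‖c n‖ ^ 2 := by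
      refine tsum_nonneg fun n => ?_
      rcases le_or_gt (|n|) 1 with hj | hj
      · rw [hc n hj]; simp
      · have : (1 : ℝ) < |(n : ℝ)| := by exact_mod_cast hj
        have : (1 : ℝ) ≤ (n : ℝ) ^ 2 := by rw [← sq_abs]; nlinarith
        unfold lam
        have := sub_nonneg.2 this
        positivity
    positivity

end EWP

namespace EWP
open Complex (I)
open scoped ContDiff Topology

lemma max_principle {f : ℝ → ℝ → ℝ} {b K M0 : ℝ} (hb : 0 ≤ b)
    (hcont : ContinuousOn (fun p : ℝ × ℝ => f p.1 p.2) (Set.Icc 0 b ×ˢ Set.univ))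
    (hper : ∀ s ∈ Set.Icc 0 b, ∀ θ, f s (θ + 2 * π) = f s θ)
    (h0 : ∀ θ, f 0 θ ≤ M0)
    (hd : ∀ s, 0 < s → s ≤ b → ∀ θ, ∃ ft fx v, HasDerivAt (fun r => f r θ) ft s ∧
      HasDerivAt (f s) fx θ ∧ ft + v * fx ≤ K) (θ : ℝ) : f b θ ≤ M0 + K * b := by
  have key : ∀ ε > 0, f b θ ≤ M0 + (K + ε) * b := by
    intro ε hε
    set g : ℝ × ℝ → ℝ := fun p => f p.1 p.2 - (K + ε) * p.1 with hg
    have hgc : ContinuousOn g (Set.Icc 0 b ×ˢ Set.Icc 0 (2 * π)) := by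
      apply ContinuousOn.sub
      · exact hcont.mono (Set.prod_mono le_rfl (Set.subset_univ _))
      · fun_prop
    obtain ⟨⟨t, x⟩, hmem, hmax⟩ := (isCompact_Icc.prod isCompact_Icc).exists_isMaxOn
      (⟨(0, 0), ⟨⟨le_rfl, hb⟩, ⟨le_rfl, by positivity⟩⟩⟩ :
        (Set.Icc 0 b ×ˢ Set.Icc 0 (2 * π)).Nonempty) hgc
    have hmax' : ∀ s ∈ Set.Icc 0 b, ∀ y, g (s, y) ≤ g (t, x) := by
      intro s hs y
      have hp : Function.Periodic (f s) (2 * π) := hper s hs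
      obtain ⟨z, hz, h⟩ := hp.exists_mem_Ico₀ (by positivity) y
      have : g (s, y) = g (s, z) := by simp only [hg]; rw [h]
      rw [this]
      exact hmax (⟨hs, ⟨hz.1, hz.2.le⟩⟩ : (s, z) ∈ Set.Icc 0 b ×ˢ Set.Icc 0 (2 * π))
    have ht : t ∈ Set.Icc 0 b := hmem.1
    have hle := hmax' b ⟨hb, le_rfl⟩ θ
    rcases ht.1.eq_or_lt with h | h
    · have h1 : g (t, x) ≤ M0 := by simp only [hg, ← h]; simpa using h0 x
      simp only [hg] at hle h1
      linarith
    · exfalso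
      obtain ⟨ft, fx, v, h1, h2, h3⟩ := hd t h ht.2 x
      have hfx : fx = 0 := by
        refine IsLocalMax.hasDerivAt_eq_zero (f := f t) (a := x) ?_ h2
        filter_upwards with y
        have := hmax' t ht y
        simp only [hg] at this
        linarith
      have h4 : HasDerivAt (fun r => g (r, x)) (ft - (K + ε)) t := by
        exact (h1.sub ((hasDerivAt_id t).const_mul (K + ε))).congr_deriv (by ring)
      have h5 : 0 ≤ ft - (K + ε) := by
        have h6 := (hasDerivAt_iff_tendsto_slope.1 h4).mono_left
          (nhdsWithin_mono t (s := Set.Iio t) (fun y hy => ne_of_lt hy))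
        refine ge_of_tendsto h6 ?_
        have : Set.Ioo 0 t ∈ 𝓝[<] t := Ioo_mem_nhdsLT h
        filter_upwards [this] with r hr
        rw [slope_def_field]
        apply div_nonneg_of_nonpos
        · have := hmax' r ⟨hr.1.le, hr.2.le.trans ht.2⟩ x
          linarith
        · linarith [hr.2]
      rw [hfx] at h3
      linarith
  by_contra hcon
  push Not at hcon
  have := key ((f b θ - (M0 + K * b)) / (b + 1) / 2) (by
    have : 0 < f b θ - (M0 + K * b) := by linarith
    positivity)
  set δ := f b θ - (M0 + K * b) with hδ
  have hδ0 : 0 < δ := by linarith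
  have h7 : δ / (b + 1) / 2 * b ≤ δ / 2 := by
    rw [div_div, div_mul_eq_mul_div, div_le_div_iff₀ (by positivity) (by positivity)]
    nlinarith
  nlinarith

/-- time interval -/
def TI (T : EReal) : Set ℝ := {s : ℝ | 0 ≤ s ∧ (s : EReal) < T}
/-- space-time -/
def ST (T : EReal) : Set (ℝ × ℝ) := {p : ℝ × ℝ | 0 ≤ p.1 ∧ (p.1 : EReal) < T}

lemma TI_mono {T : EReal} {s b : ℝ} (hb : b ∈ TI T) (hs : s ∈ Set.Icc 0 b) : s ∈ TI T :=
  ⟨hs.1, lt_of_le_of_lt (by exact_mod_cast hs.2) hb.2⟩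

lemma exists_gt {T : EReal} {s : ℝ} (hs : s ∈ TI T) : ∃ b, s < b ∧ b ∈ TI T := by
  obtain ⟨b, h1, h2⟩ := EReal.lt_iff_exists_real_btwn.1 hs.2
  have : s < b := by exact_mod_cast h1
  exact ⟨b, this, hs.1.trans this.le, h2⟩

lemma TI_nhds {T : EReal} {s : ℝ} (h0 : 0 < s) (hs : s ∈ TI T) : TI T ∈ 𝓝 s := by
  obtain ⟨b, h1, h2⟩ := exists_gt hs
  filter_upwards [Ioo_mem_nhds h0 h1] with r hr
  exact TI_mono h2 ⟨hr.1.le, hr.2.le⟩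

lemma TI_convex (T : EReal) : Convex ℝ (TI T) := by
  apply Set.OrdConnected.convex
  exact ⟨fun x hx y hy z hz => TI_mono hy ⟨hx.1.trans hz.1, hz.2⟩⟩

lemma TI_interior {T : EReal} (hT : 0 < T) : (interior (TI T)).Nonempty := by
  obtain ⟨b, h1, h2⟩ := exists_gt (T := T) (s := 0) ⟨le_rfl, by simpa using hT⟩
  exact ⟨b, mem_interior_iff_mem_nhds.2 (TI_nhds h1 h2)⟩

lemma ST_eq (T : EReal) : ST T = TI T ×ˢ Set.univ := by
  ext p; simp [ST, TI]

lemma TI_ud {T : EReal} (hT : 0 < T) : UniqueDiffOn ℝ (TI T) :=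
  uniqueDiffOn_convex (TI_convex T) (TI_interior hT)

lemma ST_ud {T : EReal} (hT : 0 < T) : UniqueDiffOn ℝ (ST T) := by
  rw [ST_eq]; exact (TI_ud hT).prod uniqueDiffOn_univ

/-- smooth, periodic in space, on space-time -/
def PS (T : EReal) (V : ℝ → ℝ → ℝ) : Prop :=
  ContDiffOn ℝ ∞ (fun p : ℝ × ℝ => V p.1 p.2) (ST T) ∧ ∀ s ∈ TI T, ∀ θ, V s (θ + 2 * π) = V s θ

lemma PS.sp {T : EReal} {V : ℝ → ℝ → ℝ} (h : PS T V) {s : ℝ} (hs : s ∈ TI T) : SP (V s) := by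
  refine ⟨?_, h.2 s hs⟩
  rw [← contDiffOn_univ]
  exact h.1.comp (f := fun x : ℝ => (s, x)) (by fun_prop) (fun x _ => hs)

lemma PS.hasFD {T : EReal} {V : ℝ → ℝ → ℝ} (h : PS T V) {p : ℝ × ℝ} (hp : p ∈ ST T) :
    HasFDerivWithinAt (fun p : ℝ × ℝ => V p.1 p.2)
      (fderivWithin ℝ (fun p : ℝ × ℝ => V p.1 p.2) (ST T) p) (ST T) p :=
  ((h.1.differentiableOn (by simp)) p hp).hasFDerivWithinAt

/-- time derivative -/
noncomputable def dt (T : EReal) (V : ℝ → ℝ → ℝ) (s θ : ℝ) : ℝ :=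
  derivWithin (fun r => V r θ) (TI T) s

lemma PS.space {T : EReal} (hT : 0 < T) {V : ℝ → ℝ → ℝ} (h : PS T V) : PS T (fun s => deriv (V s)) := by
  refine ⟨?_, fun s hs => (h.sp hs).deriv.2⟩
  have h1 := h.1.fderivWithin (m := ∞) (ST_ud hT) (by simp)
  have h2 : ContDiffOn ℝ ∞ (fun p => fderivWithin ℝ (fun p : ℝ × ℝ => V p.1 p.2) (ST T) p (0, 1)) (ST T) :=
    h1.clm_apply contDiffOn_const
  refine h2.congr fun p hp => ?_
  have h3 := (h.hasFD hp).comp_hasDerivWithinAt (f := fun x : ℝ => (p.1, x)) (s := Set.univ) p.2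
    (((hasDerivAt_const p.2 p.1).prodMk (hasDerivAt_id p.2)).hasDerivWithinAt) (fun x _ => hp)
  rw [hasDerivWithinAt_univ] at h3
  exact h3.deriv

lemma PS.time_has {T : EReal} {V : ℝ → ℝ → ℝ} (h : PS T V) {p : ℝ × ℝ} (hp : p ∈ ST T) :
    HasDerivWithinAt (fun r => V r p.2)
      (fderivWithin ℝ (fun p : ℝ × ℝ => V p.1 p.2) (ST T) p (1, 0)) (TI T) p.1 :=
  (h.hasFD hp).comp_hasDerivWithinAt (f := fun x : ℝ => (x, p.2)) (s := TI T) p.1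
    (((hasDerivAt_id p.1).prodMk (hasDerivAt_const p.1 p.2)).hasDerivWithinAt) (fun x hx => hx)

lemma PS.time {T : EReal} (hT : 0 < T) {V : ℝ → ℝ → ℝ} (h : PS T V) : PS T (dt T V) := by
  constructor
  · have h1 := h.1.fderivWithin (m := ∞) (ST_ud hT) (by simp)
    have h2 : ContDiffOn ℝ ∞ (fun p => fderivWithin ℝ (fun p : ℝ × ℝ => V p.1 p.2) (ST T) p (1, 0)) (ST T) :=
      h1.clm_apply contDiffOn_const
    refine h2.congr fun p hp => ?_
    exact (h.time_has hp).derivWithin (TI_ud hT p.1 hp)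
  · intro s hs θ
    unfold dt
    apply derivWithin_congr
    · intro r hr; exact h.2 r hr θ
    · exact h.2 s hs θ

lemma PS.hasDerivAt {T : EReal} {V : ℝ → ℝ → ℝ} (h : PS T V) {s : ℝ} (h0 : 0 < s)
    (hs : s ∈ TI T) (θ : ℝ) : HasDerivAt (fun r => V r θ) (dt T V s θ) s := by
  have h1 := (h.time_has (p := (s, θ)) hs).differentiableWithinAt.hasDerivWithinAt
  exact h1.hasDerivAt (TI_nhds h0 hs)

lemma PS.bound {T : EReal} {V : ℝ → ℝ → ℝ} (h : PS T V) {b : ℝ} (hb : b ∈ TI T) :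
    ∃ B, 0 ≤ B ∧ ∀ s ∈ Set.Icc 0 b, ∀ θ ∈ Set.Icc 0 (2 * π), |V s θ| ≤ B := by
  have hc : ContinuousOn (fun p : ℝ × ℝ => V p.1 p.2) (Set.Icc 0 b ×ˢ Set.Icc 0 (2 * π)) :=
    h.1.continuousOn.mono (fun p hp => TI_mono hb hp.1)
  obtain ⟨B, hB⟩ := (isCompact_Icc.prod isCompact_Icc).exists_bound_of_continuousOn hc
  refine ⟨B, (norm_nonneg _).trans (hB (0, 0) ⟨⟨le_rfl, hb.1⟩, ⟨le_rfl, by positivity⟩⟩), ?_⟩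
  intro s hs θ hθ
  exact hB (s, θ) ⟨hs, hθ⟩

lemma PS.iter {T : EReal} (hT : 0 < T) {V : ℝ → ℝ → ℝ} (h : PS T V) (k : ℕ) :
    PS T (fun s => deriv^[k] (V s)) := by
  induction k with
  | zero => exact h
  | succ k ih =>
    have := ih.space hT
    simpa only [Function.iterate_succ_apply'] using this

lemma PS.decay {T : EReal} (hT : 0 < T) {V : ℝ → ℝ → ℝ} (h : PS T V) {b : ℝ} (hb : b ∈ TI T) (k : ℕ) :
    ∃ B, 0 ≤ B ∧ ∀ s ∈ Set.Icc 0 b, ∀ n : ℤ, |(n : ℝ)| ^ k * ‖fourierC (V s) n‖ ≤ B := by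
  obtain ⟨B, h0, hB⟩ := (h.iter hT k).bound hb
  exact ⟨B, h0, fun s hs n => (h.sp (TI_mono hb hs)).decay k (hB s hs) n⟩

lemma PS.coef_hasDerivAt {T : EReal} (hT : 0 < T) {V : ℝ → ℝ → ℝ} (h : PS T V) {s : ℝ} (h0 : 0 < s)
    (hs : s ∈ TI T) (n : ℤ) :
    HasDerivAt (fun r => fourierC (V r) n) (fourierC (dt T V s) n) s := by
  obtain ⟨b, h1, h2⟩ := exists_gt hs
  obtain ⟨B, hB0, hB⟩ := (h.time hT).bound h2
  have hI : ∀ r ∈ Set.Ioo 0 b, r ∈ TI T := fun r hr => TI_mono h2 ⟨hr.1.le, hr.2.le⟩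
  have hn : Set.Ioo 0 b ∈ 𝓝 s := Ioo_mem_nhds h0 h1
  have key := intervalIntegral.hasDerivAt_integral_of_dominated_loc_of_deriv_le (μ := volume)
    (a := 0) (b := 2 * π) (x₀ := s) (s := Set.Ioo 0 b)
    (F := fun r θ => (V r θ : ℂ) * Complex.exp (-I * (n : ℂ) * (θ : ℂ)))
    (F' := fun r θ => (dt T V r θ : ℂ) * Complex.exp (-I * (n : ℂ) * (θ : ℂ)))
    (bound := fun _ => B) hn
    (by
      filter_upwards [hn] with r hr
      have := (h.sp (hI r hr)).1.continuous
      apply Continuous.aestronglyMeasurable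
      fun_prop)
    (intable (h.sp hs).1.continuous n _ _)
    (by
      have := ((h.time hT).sp hs).1.continuous
      apply Continuous.aestronglyMeasurable
      fun_prop)
    (by
      filter_upwards with θ hθ r hr
      rw [Set.uIoc_of_le (by positivity)] at hθ
      rw [norm_mul, norm_e', mul_one, Complex.norm_real]
      exact hB r ⟨hr.1.le, hr.2.le⟩ θ ⟨hθ.1.le, hθ.2⟩)
    (by simp)
    (by
      filter_upwards with θ hθ r hr
      exact ((h.hasDerivAt hr.1 (hI r hr) θ).ofReal_comp).mul_const _)
  exact key.2.const_mul _

lemma PS.coef_continuousOn {T : EReal} {V : ℝ → ℝ → ℝ} (h : PS T V)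
    (n : ℤ) : ContinuousOn (fun r => fourierC (V r) n) (TI T) := by
  intro s hs
  obtain ⟨b, h1, h2⟩ := exists_gt hs
  obtain ⟨B, hB0, hB⟩ := h.bound h2
  have hn : Set.Icc 0 b ∈ 𝓝[TI T] s := by
    filter_upwards [self_mem_nhdsWithin, mem_nhdsWithin_of_mem_nhds (Iio_mem_nhds h1)] with r hr hr'
    exact ⟨hr.1, le_of_lt hr'⟩
  unfold fourierC
  refine ContinuousWithinAt.mul continuousWithinAt_const ?_
  refine intervalIntegral.continuousWithinAt_of_dominated_interval (bound := fun _ => B) ?_ ?_ ?_ ?_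
  · filter_upwards [hn] with r hr
    have := (h.sp (TI_mono h2 hr)).1.continuous
    apply Continuous.aestronglyMeasurable
    fun_prop
  · filter_upwards [hn] with r hr
    filter_upwards with θ hθ
    rw [Set.uIoc_of_le (by positivity)] at hθ
    rw [norm_mul, norm_e', mul_one, Complex.norm_real]
    exact hB r hr θ ⟨hθ.1.le, hθ.2⟩
  · simp
  · filter_upwards with θ hθ
    refine ContinuousWithinAt.mul ?_ continuousWithinAt_const
    refine Complex.continuous_ofReal.continuousAt.comp_continuousWithinAt ?_
    exact (h.time_has (p := (s, θ)) hs).continuousWithinAt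

end EWP

namespace EWP
open Complex (I)
open scoped ContDiff Topology

lemma lam_le (n : ℤ) : |lam n| ≤ |(n : ℝ)| ^ 3 := by
  unfold lam
  rcases eq_or_ne n 0 with rfl | h
  · simp
  rw [abs_mul, abs_abs]
  have h : |(n : ℝ) ^ 2 - 1| ≤ |(n : ℝ)| ^ 2 := by
    rw [sq_abs]
    have h1 : (1 : ℝ) ≤ |(n : ℝ)| := by exact_mod_cast Int.one_le_abs h
    have h2 : (1 : ℝ) ≤ (n : ℝ) ^ 2 := by rw [← sq_abs]; nlinarith
    rw [abs_of_nonneg (by linarith)]; linarith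
  calc _ ≤ |(n : ℝ)| * |(n : ℝ)| ^ 2 := by gcongr
    _ = _ := by ring

lemma lam_sign (n : ℤ) : ((n.sign : ℤ) : ℝ) * ((n : ℝ) ^ 3 - n) = lam n := by
  unfold lam
  rcases lt_trichotomy n 0 with h | h | h
  · have h' : (n : ℝ) < 0 := by exact_mod_cast h
    rw [Int.sign_eq_neg_one_of_neg h, abs_of_neg h']; push_cast; ring
  · subst h; simp
  · have h' : (0 : ℝ) < n := by exact_mod_cast h
    rw [Int.sign_eq_one_of_pos h, abs_of_pos h']; push_cast; ring

lemma lam_signC (n : ℤ) : ((n.sign : ℤ) : ℂ) * ((n : ℂ) ^ 3 - n) = (lam n : ℂ) := by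
  rw [← lam_sign]; push_cast; ring

lemma dec3 {n : ℤ} {x B : ℝ} (hx : |(n : ℝ)| ^ 5 * x ≤ B) :
    |(n : ℝ)| ^ 3 * x ≤ B * (1 / (n : ℝ) ^ 2) := by
  rcases eq_or_ne n 0 with rfl | h
  · simp
  · have h1 : 0 < |(n : ℝ)| := by positivity
    rw [mul_one_div, ← sq_abs, le_div_iff₀ (by positivity)]
    calc _ = |(n : ℝ)| ^ 5 * x := by ring
      _ ≤ B := hx

lemma summ2 (B : ℝ) : Summable (fun n : ℤ => B * (1 / (n : ℝ) ^ 2)) :=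
  ((Real.summable_one_div_int_pow (p := 2)).2 (by norm_num)).mul_left B

lemma SP.summ_lam {f : ℝ → ℝ} (hf : SP f) : Summable (fun n : ℤ => ‖(lam n : ℂ) * fourierC f n‖) := by
  refine Summable.of_nonneg_of_le (fun n => norm_nonneg _) (fun n => ?_) (hf.summable 3)
  rw [norm_mul, Complex.norm_real]
  gcongr
  exact lam_le n

lemma SP.summ_nlam {f : ℝ → ℝ} (hf : SP f) :
    Summable (fun n : ℤ => |(n : ℝ)| * ‖(lam n : ℂ) * fourierC f n‖) := by
  refine Summable.of_nonneg_of_le (fun n => by positivity) (fun n => ?_) (hf.summable 4)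
  rw [norm_mul, Complex.norm_real]
  have := lam_le n
  calc _ ≤ |(n : ℝ)| * (|(n : ℝ)| ^ 3 * ‖fourierC f n‖) := by gcongr; exact this
    _ = _ := by ring

lemma SP.summ_nlam' {f : ℝ → ℝ} (hf : SP f) :
    Summable (fun n : ℤ => ‖I * n * ((lam n : ℂ) * fourierC f n)‖) := by
  have := hf.summ_nlam
  simpa only [norm_mul, Complex.norm_I, one_mul, Complex.norm_intCast] using this

lemma SP.summ0 {f : ℝ → ℝ} (hf : SP f) : Summable (fun n : ℤ => ‖fourierC f n‖) := by
  simpa using hf.summable 0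

lemma herm_lam (f : ℝ → ℝ) (n : ℤ) : (lam ((-n : ℤ) : ℝ) : ℂ) * fourierC f (-n) =
    (starRingEnd ℂ) ((lam n : ℂ) * fourierC f n) := by
  rw [fourierC_neg, map_mul, Complex.conj_ofReal]
  push_cast
  rw [lam_neg]

lemma herm_nlam (f : ℝ → ℝ) (n : ℤ) :
    I * ((-n : ℤ) : ℂ) * ((lam ((-n : ℤ) : ℝ) : ℂ) * fourierC f (-n)) =
    (starRingEnd ℂ) (I * n * ((lam n : ℂ) * fourierC f n)) := by
  rw [herm_lam, map_mul _ (I * (n : ℂ)), map_mul _ I, Complex.conj_I]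
  simp

/-- `ω` in terms of Fourier coefficients -/
noncomputable def om (v : ℝ → ℝ) : ℝ → ℝ := synth (fun n => (lam n : ℂ) * fourierC v n)
/-- `ω_θ` in terms of Fourier coefficients -/
noncomputable def om' (v : ℝ → ℝ) : ℝ → ℝ := synth (fun n => I * n * ((lam n : ℂ) * fourierC v n))

lemma SP.om_cp {v : ℝ → ℝ} (h : SP v) : CP (om v) := synth_cp h.summ_lam
lemma SP.om'_cp {v : ℝ → ℝ} (h : SP v) : CP (om' v) := synth_cp h.summ_nlam'
lemma SP.om_has {v : ℝ → ℝ} (h : SP v) (θ : ℝ) : HasDerivAt (om v) (om' v θ) θ :=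
  synth_hasDerivAt h.summ_lam h.summ_nlam θ
lemma SP.om_coef {v : ℝ → ℝ} (h : SP v) (n : ℤ) : fourierC (om v) n = (lam n : ℂ) * fourierC v n :=
  fourierC_synth h.summ_lam (herm_lam v) n
lemma SP.om'_coef {v : ℝ → ℝ} (h : SP v) (n : ℤ) :
    fourierC (om' v) n = I * n * ((lam n : ℂ) * fourierC v n) :=
  fourierC_synth h.summ_nlam' (herm_nlam v) n

lemma SP.coef_g {v : ℝ → ℝ} (h : SP v) (n : ℤ) :
    fourierC (fun x => _root_.deriv (_root_.deriv (_root_.deriv v)) x + _root_.deriv v x) n =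
      -I * ((n : ℂ) ^ 3 - n) * fourierC v n := by
  rw [fourierC_add h.deriv.deriv.deriv.1.continuous h.deriv.1.continuous,
    h.deriv.deriv.fourierC_deriv, h.deriv.fourierC_deriv, h.fourierC_deriv]
  linear_combination ((n : ℂ) ^ 3 * I * fourierC v n) * Complex.I_sq

lemma SP.om_eq {v : ℝ → ℝ} (h : SP v) (θ : ℝ) :
    -hilbertT (fun x => _root_.deriv (_root_.deriv (_root_.deriv v)) x + _root_.deriv v x) θ = om v θ := by
  unfold hilbertT om synth
  rw [← Complex.neg_re, ← tsum_neg]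
  congr 2
  ext n
  dsimp only
  rw [h.coef_g, ← lam_signC]
  linear_combination (- (n.sign : ℂ) * ((n : ℂ) ^ 3 - n) * fourierC v n * Complex.exp (I * n * θ)) * Complex.I_sq

/-- energy -/
noncomputable def er (v : ℝ → ℝ) : ℝ := ∑' n : ℤ, lam n * ‖fourierC v n‖ ^ 2

lemma coef_mul_neg (v : ℝ → ℝ) (n : ℤ) : fourierC v n * fourierC v (-n) = ((‖fourierC v n‖ ^ 2 : ℝ) : ℂ) := by
  rw [fourierC_neg, Complex.mul_conj, Complex.normSq_eq_norm_sq]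

lemma er_eq (v : ℝ → ℝ) : (er v : ℂ) = ∑' n : ℤ, (lam n : ℂ) * (fourierC v n * fourierC v (-n)) := by
  unfold er
  rw [Complex.ofReal_tsum]
  congr 1; ext n
  rw [coef_mul_neg]; push_cast; rfl

lemma SP.er_summable {v : ℝ → ℝ} (h : SP v) : Summable (fun n : ℤ => lam n * ‖fourierC v n‖ ^ 2) := by
  obtain ⟨B, hB0, hB⟩ := SP.bdd h.cp
  refine Summable.of_norm_bounded (h.summ_lam.mul_right B) fun n => ?_
  have := fourierC_bound (fun θ _ => hB θ) n
  rw [norm_mul, norm_mul, Complex.norm_real, norm_pow, norm_norm, sq, ← mul_assoc]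
  gcongr

lemma SP.E0_eq {v : ℝ → ℝ} (h : SP v) :
    ∫ x in (0:ℝ)..(2 * π), hilbertT v x *
      (_root_.deriv (_root_.deriv (_root_.deriv v)) x + _root_.deriv v x) = 2 * π * er v := by
  set g := fun x => _root_.deriv (_root_.deriv (_root_.deriv v)) x + _root_.deriv v x with hg
  have hgs : SP g := h.deriv.deriv.deriv.add h.deriv
  have hsm : Summable (fun n : ℤ => ‖-I * ((n.sign : ℤ) : ℂ) * fourierC v n‖) := by
    refine Summable.of_nonneg_of_le (fun n => norm_nonneg _) (fun n => ?_) h.summ0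
    rw [norm_mul, norm_mul, norm_neg, Complex.norm_I, one_mul, Complex.norm_intCast]
    have : |((n.sign : ℤ) : ℝ)| ≤ 1 := by
      rcases lt_trichotomy n 0 with h | h | h
      · rw [Int.sign_eq_neg_one_of_neg h]; simp
      · subst h; simp
      · rw [Int.sign_eq_one_of_pos h]; simp
    calc _ ≤ 1 * ‖fourierC v n‖ := by gcongr
      _ = _ := one_mul _
  have hh : ∀ n : ℤ, -I * (((-n).sign : ℤ) : ℂ) * fourierC v (-n) =
      (starRingEnd ℂ) (-I * ((n.sign : ℤ) : ℂ) * fourierC v n) := by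
    intro n
    rw [fourierC_neg, map_mul, map_mul, map_neg, Complex.conj_I, Int.sign_neg]
    simp
  have h1 := conv hsm hgs.1.continuous (synth_hasSum hsm hh) 0
  have h2 : fourierC (fun x => hilbertT v x * g x) 0 = (er v : ℂ) := by
    rw [er_eq, hilbertT_eq, ← h1.tsum_eq]
    congr 1; ext n
    rw [zero_sub, hg, h.coef_g, ← lam_signC]
    push_cast
    linear_combination (- (n.sign : ℂ) * ((n : ℂ) ^ 3 - n) * fourierC v n * fourierC v (-n)) * Complex.I_sq
  unfold fourierC at h2
  simp only [Int.cast_zero, mul_zero, zero_mul, Complex.exp_zero, mul_one] at h2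
  rw [intervalIntegral.integral_ofReal] at h2
  have hpi : (π : ℂ) ≠ 0 := by exact_mod_cast Real.pi_ne_zero
  have h3 : ((∫ x in (0:ℝ)..(2 * π), hilbertT v x * g x : ℝ) : ℂ) = ((2 * π * er v : ℝ) : ℂ) := by
    push_cast
    rw [← h2]; field_simp
  exact_mod_cast h3

section
variable {T : EReal} {u : ℝ → ℝ → ℝ} {s : ℝ}

lemma PS.om_time (hT : 0 < T) (hu : PS T u) (h0 : 0 < s) (hs : s ∈ TI T) (θ : ℝ) :
    HasDerivAt (fun r => om (u r) θ) (om (dt T u s) θ) s := by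
  obtain ⟨b, h1, h2⟩ := exists_gt hs
  obtain ⟨B, hB0, hB⟩ := (hu.time hT).decay hT h2 5
  have hI : ∀ r ∈ Set.Ioo 0 b, r ∈ TI T := fun r hr => TI_mono h2 ⟨hr.1.le, hr.2.le⟩
  have key := hasDerivAt_tsum_of_isPreconnected (𝕜 := ℝ) (t := Set.Ioo 0 b) (y₀ := s) (y := s)
    (g := fun (n : ℤ) (r : ℝ) => (lam n : ℂ) * fourierC (u r) n * Complex.exp (I * n * θ))
    (g' := fun (n : ℤ) (r : ℝ) => (lam n : ℂ) * fourierC (dt T u r) n * Complex.exp (I * n * θ))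
    (summ2 B) isOpen_Ioo isPreconnected_Ioo
    (fun n r hr => ((hu.coef_hasDerivAt hT hr.1 (hI r hr) n).const_mul _).mul_const _)
    (fun n r hr => by
      rw [norm_mul, norm_e, mul_one, norm_mul, Complex.norm_real]
      refine le_trans ?_ (dec3 (hB r ⟨hr.1.le, hr.2.le⟩ n))
      gcongr
      exact lam_le n)
    ⟨h0, h1⟩ (summ_e (hu.sp hs).summ_lam θ) ⟨h0, h1⟩
  exact Complex.reCLM.hasFDerivAt.comp_hasDerivAt s key

/-- the nonlinearity -/
noncomputable def GG (v : ℝ → ℝ) (x : ℝ) : ℝ := v x * om' v x + 2 * (deriv v x * om v x)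

lemma SP.GG_cp {v : ℝ → ℝ} (h : SP v) : CP (GG v) := by
  refine (h.cp.mul h.om'_cp).add ?_
  have := h.deriv.cp.mul h.om_cp
  exact ⟨continuous_const.mul this.1, fun θ => congrArg (2 * ·) (this.2 θ)⟩

lemma SP.GG_coef {v : ℝ → ℝ} (h : SP v) (n : ℤ) :
    fourierC (GG v) n = fourierC (fun x => v x * om' v x) n
      + 2 * fourierC (fun x => _root_.deriv v x * om v x) n := by
  have h1 := h.deriv.cp.mul h.om_cp
  have h2 := h.cp.mul h.om'_cp
  have h3 : Continuous (fun x => 2 * (_root_.deriv v x * om v x)) := continuous_const.mul h1.1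
  unfold GG
  rw [fourierC_add h2.1 h3, fourierC_smul]
  norm_num

lemma SP.GG_orth {v : ℝ → ℝ} (h : SP v) : HasSum (fun j : ℤ => fourierC v j * fourierC (GG v) (-j)) 0 := by
  have h1 := h.cp.conv h.summ0 h.GG_cp.1 0
  have h2 : fourierC (fun x => v x * GG v x) 0 = 0 := by
    have h3 := fourierC_deriv' (f := fun x => v x * v x * om v x) (f' := fun x => v x * GG v x)
      ((h.cp.mul h.cp).mul h.om_cp) (h.cp.mul h.GG_cp).1 (fun x => by
        refine (((h.hasDerivAt x).mul (h.hasDerivAt x)).mul (h.om_has x)).congr_deriv ?_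
        unfold GG
        simp only [Pi.mul_apply]
        ring) 0
    rw [h3]; simp
  rw [h2] at h1
  simpa using h1

end

end EWP

namespace EWP
open Complex (I)
open scoped ContDiff Topology

section
variable {T : EReal} {u : ℝ → ℝ → ℝ} {s : ℝ}

/-- The equation in Fourier coefficients. -/
def FEq (T : EReal) (u : ℝ → ℝ → ℝ) : Prop :=
  ∀ s, 0 < s → s ∈ TI T → ∀ n : ℤ,
    (lam n : ℂ) * fourierC (dt T u s) n = - fourierC (GG (u s)) n

lemma feq_of_eq (hT : 0 < T) (hu : PS T u)
    (heq : ∀ t : ℝ, 0 ≤ t → (t : EReal) < T → ∀ θ : ℝ,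
        derivWithin
            (fun s => -hilbertT (fun x => deriv (deriv (deriv (u s))) x + deriv (u s) x) θ)
            {s : ℝ | 0 ≤ s ∧ (s : EReal) < T} t
          + u t θ *
            deriv (fun x => -hilbertT (fun y => deriv (deriv (deriv (u t))) y + deriv (u t) y) x) θ
          + 2 * deriv (u t) θ *
            (-hilbertT (fun x => deriv (deriv (deriv (u t))) x + deriv (u t) x) θ) = 0) :
    FEq T u := by
  intro s h0 hs n
  have hsp := hu.sp hs
  have h1 : ∀ θ, om (dt T u s) θ = - GG (u s) θ := by
    intro θ
    have e := heq s hs.1 hs.2 θ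
    have e1 : derivWithin
            (fun s => -hilbertT (fun x => deriv (deriv (deriv (u s))) x + deriv (u s) x) θ)
            {s : ℝ | 0 ≤ s ∧ (s : EReal) < T} s = om (dt T u s) θ := by
      have : derivWithin
            (fun s => -hilbertT (fun x => deriv (deriv (deriv (u s))) x + deriv (u s) x) θ)
            {s : ℝ | 0 ≤ s ∧ (s : EReal) < T} s = derivWithin (fun r => om (u r) θ) (TI T) s :=
        derivWithin_congr (fun r hr => (hu.sp hr).om_eq θ) (hsp.om_eq θ)
      rw [this]
      exact (hu.om_time hT h0 hs θ).hasDerivWithinAt.derivWithin (TI_ud hT s hs)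
    have e2 : deriv (fun x => -hilbertT (fun y => deriv (deriv (deriv (u s))) y + deriv (u s) y) x) θ
        = om' (u s) θ := by
      rw [show (fun x => -hilbertT (fun y => deriv (deriv (deriv (u s))) y + deriv (u s) y) x) = om (u s)
        from funext hsp.om_eq]
      exact (hsp.om_has θ).deriv
    rw [e1, e2, hsp.om_eq] at e
    unfold GG
    linarith
  rw [← ((hu.time hT).sp hs).om_coef n, ← fourierC_neg']
  congr 1
  exact funext h1

lemma er_deriv (hT : 0 < T) (hu : PS T u) (hf : FEq T u) (h0 : 0 < s) (hs : s ∈ TI T) :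
    HasDerivAt (fun r => (er (u r) : ℂ)) 0 s := by
  obtain ⟨b, h1, h2⟩ := exists_gt hs
  obtain ⟨B, hB0, hB⟩ := (hu.time hT).decay hT h2 5
  obtain ⟨A, hA0, hA⟩ := hu.decay hT h2 0
  have hI : ∀ r ∈ Set.Ioo 0 b, r ∈ TI T := fun r hr => TI_mono h2 ⟨hr.1.le, hr.2.le⟩
  have hneg : ∀ f : ℝ → ℝ, ∀ n, ‖fourierC f (-n)‖ = ‖fourierC f n‖ := by
    intro f n; rw [fourierC_neg]; exact RCLike.norm_conj _
  have key := hasDerivAt_tsum_of_isPreconnected (𝕜 := ℝ) (t := Set.Ioo 0 b) (y₀ := s) (y := s)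
    (g := fun (n : ℤ) (r : ℝ) => (lam n : ℂ) * (fourierC (u r) n * fourierC (u r) (-n)))
    (g' := fun (n : ℤ) (r : ℝ) => (lam n : ℂ) * (fourierC (dt T u r) n * fourierC (u r) (-n) +
      fourierC (u r) n * fourierC (dt T u r) (-n)))
    (summ2 (2 * A * B)) isOpen_Ioo isPreconnected_Ioo
    (fun n r hr => ((hu.coef_hasDerivAt hT hr.1 (hI r hr) n).mul
      (hu.coef_hasDerivAt hT hr.1 (hI r hr) (-n))).const_mul _)
    (fun n r hr => by
      have hr' : r ∈ Set.Icc 0 b := ⟨hr.1.le, hr.2.le⟩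
      have h3 := dec3 (hB r hr' n)
      have h4 := hA r hr' n
      rw [pow_zero, one_mul] at h4
      have h5 : ‖fourierC (dt T u r) n * fourierC (u r) (-n) +
          fourierC (u r) n * fourierC (dt T u r) (-n)‖ ≤ 2 * A * ‖fourierC (dt T u r) n‖ := by
        refine (norm_add_le _ _).trans ?_
        rw [norm_mul, norm_mul, hneg, hneg]
        nlinarith [norm_nonneg (fourierC (dt T u r) n)]
      rw [norm_mul, Complex.norm_real]
      calc _ ≤ |(n : ℝ)| ^ 3 * (2 * A * ‖fourierC (dt T u r) n‖) := by
            gcongr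
            exact lam_le n
        _ = 2 * A * (|(n : ℝ)| ^ 3 * ‖fourierC (dt T u r) n‖) := by ring
        _ ≤ 2 * A * (B * (1 / (n : ℝ) ^ 2)) := by gcongr
        _ = _ := by ring)
    ⟨h0, h1⟩ (by
      have := (hu.sp hs).er_summable
      have := Complex.ofRealCLM.summable this
      refine this.congr fun n => ?_
      rw [coef_mul_neg]; simp) ⟨h0, h1⟩
  have hz : ∑' n : ℤ, (lam n : ℂ) * (fourierC (dt T u s) n * fourierC (u s) (-n) +
      fourierC (u s) n * fourierC (dt T u s) (-n)) = 0 := by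
    have o1 := (hu.sp hs).GG_orth
    have o2 := o1
    rw [← (Equiv.neg ℤ).hasSum_iff] at o2
    have o3 := (o1.add o2).neg
    rw [add_zero, neg_zero] at o3
    rw [← o3.tsum_eq]
    congr 1; ext n
    have f1 := hf s h0 hs n
    have f2 := hf s h0 hs (-n)
    rw [Int.cast_neg, lam_neg] at f2
    simp only [Function.comp, Equiv.neg_apply, neg_neg]
    linear_combination fourierC (u s) (-n) * f1 + fourierC (u s) n * f2
  rw [hz] at key
  simpa only [er_eq] using key

lemma er_cont (hT : 0 < T) (hu : PS T u) {b : ℝ} (hb : b ∈ TI T) :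
    ContinuousOn (fun r => er (u r)) (Set.Icc 0 b) := by
  obtain ⟨B, hB0, hB⟩ := hu.decay hT hb 5
  obtain ⟨A, hA0, hA⟩ := hu.decay hT hb 0
  unfold er
  refine continuousOn_tsum (u := fun n : ℤ => A * B * (1 / (n : ℝ) ^ 2)) (fun n => ?_) (summ2 _) ?_
  · refine ContinuousOn.mul continuousOn_const (ContinuousOn.pow (ContinuousOn.norm ?_) 2)
    exact (hu.coef_continuousOn n).mono (fun r hr => TI_mono hb hr)
  · intro n r hr
    have h3 := dec3 (hB r hr n)
    have h4 := hA r hr n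
    rw [pow_zero, one_mul] at h4
    rw [norm_mul, norm_pow, norm_norm, Real.norm_eq_abs]
    calc _ ≤ |(n : ℝ)| ^ 3 * (A * ‖fourierC (u r) n‖) := by
          rw [sq]; gcongr; exact lam_le n
      _ = A * (|(n : ℝ)| ^ 3 * ‖fourierC (u r) n‖) := by ring
      _ ≤ A * (B * (1 / (n : ℝ) ^ 2)) := by gcongr
      _ = _ := by ring

lemma er_const (hT : 0 < T) (hu : PS T u) (hf : FEq T u) (h0 : 0 < s) (hs : s ∈ TI T) :
    er (u s) = er (u 0) := by
  have hd : ∀ r ∈ Set.Ioo 0 s, HasDerivAt (fun r => er (u r)) 0 r := by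
    intro r hr
    have := er_deriv hT hu hf hr.1 (TI_mono hs ⟨hr.1.le, hr.2.le⟩)
    have := Complex.reCLM.hasFDerivAt.comp_hasDerivAt r this
    simpa [Function.comp_def] using this
  obtain ⟨c, hc, h⟩ := exists_deriv_eq_slope (fun r => er (u r)) h0 (er_cont hT hu hs)
    (fun r hr => (hd r hr).differentiableAt.differentiableWithinAt)
  rw [(hd c hc).deriv] at h
  have h' := h.symm
  rw [div_eq_zero_iff] at h'
  rcases h' with h' | h' <;> linarith

lemma D_main (hT : 0 < T) (hu : PS T u) (hf : FEq T u)
    (hm : ∀ s ∈ TI T, ∀ n : ℤ, |n| ≤ 1 → fourierC (u s) n = 0)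
    (h0 : 0 < s) (hs : s ∈ TI T) (θ : ℝ) :
    |dt T (fun r => deriv (u r)) s θ + u s θ * deriv (deriv (u s)) θ| ≤ 64 * er (u s) := by
  have hsp := hu.sp hs
  set c := fourierC (u s) with hc
  set d := fourierC (dt T u s) with hd
  have hux : PS T (fun r => deriv (u r)) := hu.space hT
  have hdsp := (hux.time hT).sp hs
  have hcp1 := hsp.cp.mul hsp.deriv.deriv.cp
  -- coefficients of the time derivative of `u_θ`
  have e1 : ∀ n, fourierC (dt T (fun r => deriv (u r)) s) n = I * n * d n := by
    intro n
    have a1 := hux.coef_hasDerivAt hT h0 hs n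
    have a2 := (hu.coef_hasDerivAt hT h0 hs n).const_mul (I * n)
    refine a1.unique (a2.congr_of_eventuallyEq ?_)
    filter_upwards [TI_nhds h0 hs] with r hr
    exact (hu.sp hr).fourierC_deriv n
  have e2 : ∀ n : ℤ, I * n * d n = -I * (((n : ℝ) / lam n : ℝ) : ℂ) * fourierC (GG (u s)) n := by
    intro n
    have f1 := hf s h0 hs n
    rcases le_or_gt (|n|) 1 with hn | hn
    · have hd0 : d n = 0 := by
        have a2 := hu.coef_hasDerivAt hT h0 hs n
        refine a2.unique ((hasDerivAt_const s (0 : ℂ)).congr_of_eventuallyEq ?_)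
        filter_upwards [TI_nhds h0 hs] with r hr
        exact hm r hr n hn
      have hl : fourierC (GG (u s)) n = 0 := by
        have : (lam n : ℂ) * d n = - fourierC (GG (u s)) n := f1
        rw [hd0, mul_zero] at this
        exact neg_eq_zero.1 this.symm
      rw [hd0, hl]; simp
    · have h1 : (1 : ℝ) < |(n : ℝ)| := by exact_mod_cast hn
      have h2 : lam n ≠ 0 := by
        unfold lam
        have : 0 < (n : ℝ) ^ 2 - 1 := by rw [← sq_abs]; nlinarith
        have : 0 < |(n : ℝ)| := by linarith
        positivity
      have h2' : (lam n : ℂ) ≠ 0 := by exact_mod_cast h2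
      have f2 : fourierC (GG (u s)) n = -((lam n : ℂ) * d n) := by rw [f1, neg_neg]
      rw [f2]
      push_cast
      field_simp
  set D : ℝ → ℝ := fun x => dt T (fun r => deriv (u r)) s x + u s x * deriv (deriv (u s)) x with hD
  have hDcp : CP D := hdsp.cp.add hcp1
  have hsumD : ∀ n : ℤ, HasSum (fun j : ℤ => (mm j ((n - j : ℤ) : ℝ) : ℂ) * (c j * c (n - j)))
      (fourierC D n) := by
    intro n
    have b1 := hsp.cp.conv hsp.summ0 hsp.om'_cp.1 n
    have b2 := hsp.deriv.cp.conv hsp.deriv.summ0 hsp.om_cp.1 n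
    have b3 := hsp.cp.conv hsp.summ0 hsp.deriv.deriv.1.continuous n
    have b4 := ((b1.add (b2.mul_left 2)).mul_left (-I * (((n : ℝ) / lam n : ℝ) : ℂ))).add b3
    have b5 : fourierC D n = -I * (((n : ℝ) / lam n : ℝ) : ℂ) * (fourierC (fun x => u s x * om' (u s) x) n
        + 2 * fourierC (fun x => deriv (u s) x * om (u s) x) n) +
        fourierC (fun x => u s x * deriv (deriv (u s)) x) n := by
      rw [← hsp.GG_coef, ← e2, ← e1]
      exact fourierC_add hdsp.1.continuous hcp1.1 n
    rw [b5]
    refine b4.congr_fun ?_ |> fun h => h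
    intro j
    rw [hsp.om'_coef, hsp.om_coef, hsp.fourierC_deriv, hsp.deriv.fourierC_deriv, hsp.fourierC_deriv]
    simp only [← hc]
    unfold mm
    have : (j : ℝ) + ((n - j : ℤ) : ℝ) = n := by push_cast; ring
    rw [this]
    push_cast
    set L := lam ((n : ℝ) - j)
    set X := lam (n : ℝ)
    linear_combination (((n : ℂ) / X) * (((n : ℂ) - j) + 2 * j) * L * c j * c (n - j)
      - ((n : ℂ) - j) ^ 2 * c j * c (n - j)) * Complex.I_sq
  obtain ⟨hs1, hs2⟩ := D_bound (c := c) (hm s hs) hsp.er_summable hsumD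
  have hfin := hDcp.hasSum hs1.of_norm θ
  have hn : ‖(D θ : ℂ)‖ ≤ ∑' n, ‖fourierC D n‖ := by
    rw [← hfin.tsum_eq]
    have : (fun n : ℤ => ‖fourierC D n * Complex.exp (I * n * θ)‖) = fun n => ‖fourierC D n‖ := by
      ext n; rw [norm_mul, norm_e, mul_one]
    refine (norm_tsum_le_tsum_norm (by rw [this]; exact hs1)).trans ?_
    rw [this]
  rw [Complex.norm_real] at hn
  exact hn.trans hs2

lemma final (hT : 0 < T) (hu : PS T u) (hf : FEq T u)
    (hm : ∀ s ∈ TI T, ∀ n : ℤ, |n| ≤ 1 → fourierC (u s) n = 0)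
    (hs : s ∈ TI T) (θ : ℝ) :
    |deriv (u s) θ| ≤ (⨆ x : ℝ, |deriv (u 0) x|) + 64 * er (u 0) * s := by
  have hux : PS T (fun r => deriv (u r)) := hu.space hT
  have h00 : (0 : ℝ) ∈ TI T := TI_mono hs ⟨le_rfl, hs.1⟩
  obtain ⟨B, hB0, hB⟩ := SP.bdd (hu.sp h00).deriv.cp
  have hsup : ∀ x, |deriv (u 0) x| ≤ ⨆ x : ℝ, |deriv (u 0) x| :=
    fun x => le_ciSup (f := fun x => |deriv (u 0) x|) ⟨B, by rintro _ ⟨y, rfl⟩; exact hB y⟩ x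
  have hcont : ContinuousOn (fun p : ℝ × ℝ => deriv (u p.1) p.2) (Set.Icc 0 s ×ˢ Set.univ) :=
    hux.1.continuousOn.mono (fun p hp => TI_mono hs hp.1)
  have hDb : ∀ r, 0 < r → r ≤ s → ∀ x,
      |dt T (fun r => deriv (u r)) r x + u r x * deriv (deriv (u r)) x| ≤ 64 * er (u 0) := by
    intro r hr hrs x
    have hr' : r ∈ TI T := TI_mono hs ⟨hr.le, hrs⟩
    rw [← er_const hT hu hf hr hr']
    exact D_main hT hu hf hm hr hr' x
  have up := max_principle (f := fun r => deriv (u r)) (K := 64 * er (u 0))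
    (M0 := ⨆ x : ℝ, |deriv (u 0) x|) hs.1 hcont
    (fun r hr x => hux.2 r (TI_mono hs hr) x) (fun x => (le_abs_self _).trans (hsup x))
    (fun r hr hrs x => ⟨_, _, u r x, hux.hasDerivAt hr (TI_mono hs ⟨hr.le, hrs⟩) x,
      (hux.sp (TI_mono hs ⟨hr.le, hrs⟩)).hasDerivAt x, (abs_le.1 (hDb r hr hrs x)).2⟩) θ
  have dn := max_principle (f := fun r x => -deriv (u r) x) (K := 64 * er (u 0))
    (M0 := ⨆ x : ℝ, |deriv (u 0) x|) hs.1 hcont.neg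
    (fun r hr x => congrArg Neg.neg (hux.2 r (TI_mono hs hr) x))
    (fun x => (neg_le_abs _).trans (hsup x))
    (fun r hr hrs x => ⟨_, _, u r x, (hux.hasDerivAt hr (TI_mono hs ⟨hr.le, hrs⟩) x).neg,
      ((hux.sp (TI_mono hs ⟨hr.le, hrs⟩)).hasDerivAt x).neg, by
        have := (abs_le.1 (hDb r hr hrs x)).1
        linarith⟩) θ
  exact abs_le.2 ⟨by linarith, up⟩

end

end EWP

/-- A priori `C¹` bound for the Euler–Weil–Petersson equation
`ω_t + u ω_θ + 2 u_θ ω = 0`, `ω = −H(u_θθθ + u_θ)`, on `[0,T) × S¹`: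
`sup_θ |u_θ(t,θ)| ≤ sup_θ |u_θ(0,θ)| + C·E₀·t` with `E₀` the initial `Ḣ^{3/2}` energy. -/
theorem ewp_apriori_C1_bound :
    ∃ C : ℝ, 0 < C ∧ ∀ (T : EReal), 0 < T → ∀ u : ℝ → ℝ → ℝ,
      -- `u` is smooth on `[0,T) × S¹`
      ContDiffOn ℝ (⊤ : ℕ∞) (fun p : ℝ × ℝ => u p.1 p.2)
        {p : ℝ × ℝ | 0 ≤ p.1 ∧ (p.1 : EReal) < T} →
      -- periodicity in `θ`
      (∀ t : ℝ, 0 ≤ t → (t : EReal) < T → ∀ θ : ℝ, u t (θ + 2 * π) = u t θ) →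
      -- the Fourier modes `n = 0, 1, −1` of `u(t,·)` vanish
      (∀ t : ℝ, 0 ≤ t → (t : EReal) < T → ∀ n : ℤ, n.natAbs ≤ 1 → fourierC (u t) n = 0) →
      -- the Euler–Weil–Petersson equation holds pointwise, with `ω = −H(∂³_θ u + ∂_θ u)`
      (∀ t : ℝ, 0 ≤ t → (t : EReal) < T → ∀ θ : ℝ,
        derivWithin
            (fun s => -hilbertT (fun x => deriv (deriv (deriv (u s))) x + deriv (u s) x) θ)
            {s : ℝ | 0 ≤ s ∧ (s : EReal) < T} t
          + u t θ *
            deriv (fun x => -hilbertT (fun y => deriv (deriv (deriv (u t))) y + deriv (u t) y) x) θ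
          + 2 * deriv (u t) θ *
            (-hilbertT (fun x => deriv (deriv (deriv (u t))) x + deriv (u t) x) θ) = 0) →
      -- conclusion: the a priori bound, with the conserved energy `E₀` of the initial data
      (∀ t : ℝ, 0 ≤ t → (t : EReal) < T → ∀ θ : ℝ,
        |deriv (u t) θ| ≤ (⨆ x : ℝ, |deriv (u 0) x|)
          + C * (∫ x in (0:ℝ)..(2 * π),
              hilbertT (u 0) x * (deriv (deriv (deriv (u 0))) x + deriv (u 0) x)) * t) := by
  refine ⟨64 / (2 * π), by positivity, ?_⟩
  intro T hT u hsm hper hmode heq t ht0 htT θ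
  have hu : EWP.PS T u := ⟨hsm, fun s hs => hper s hs.1 hs.2⟩
  have h00 : (0 : ℝ) ∈ EWP.TI T := ⟨le_rfl, by simpa using hT⟩
  have h := EWP.final hT hu (EWP.feq_of_eq hT hu heq)
    (fun s hs n hn => hmode s hs.1 hs.2 n (by rw [Int.abs_eq_natAbs] at hn; exact_mod_cast hn))
    (s := t) ⟨ht0, htT⟩ θ
  rw [(hu.sp h00).E0_eq]
  have e : 64 / (2 * π) * (2 * π * EWP.er (u 0)) = 64 * EWP.er (u 0) := by
    field_simp
  rw [e]
  exact h
end

section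
/- Let f : S¹ → ℝ be a smooth nonconstant function with mean zero (∫_{S¹} f dθ = 0), and let g = Hf be its Hilbert transform. Then there exists a point θ₀ ∈ S¹ such that f′(θ₀) < 0 and g′(θ₀) = 0. -/
open MeasureTheory Real

/-- Topological core: boundary values of a nonconstant disc-algebra function vanishing at the
origin meet the negative real axis. -/
lemma hb_core (G : ℂ → ℂ) (hc : ContinuousOn G (Metric.closedBall 0 1))
    (hd : DifferentiableOn ℂ G (Metric.ball 0 1)) (h0 : G 0 = 0)
    (hne : ∃ z ∈ Metric.closedBall (0:ℂ) 1, G z ≠ 0) :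
    ∃ z : ℂ, ‖z‖ = 1 ∧ (G z).re < 0 ∧ (G z).im = 0 := by
  by_contra hcon
  push Not at hcon
  have han : AnalyticOnNhd ℂ G (Metric.ball 0 1) := hd.analyticOnNhd Metric.isOpen_ball
  rcases han.is_constant_or_isOpen (convex_ball (0:ℂ) 1).isPreconnected with ⟨w, hw⟩ | hopen
  · obtain ⟨z, hz, hz'⟩ := hne
    have hw0 : w = 0 := by rw [← hw 0 (by simp), h0]
    apply hz'
    have hcl : closure (Metric.ball (0:ℂ) 1) = Metric.closedBall 0 1 :=
      closure_ball 0 one_ne_zero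
    have : Set.EqOn G (fun _ => 0) (Metric.closedBall (0:ℂ) 1) := by
      apply Set.EqOn.of_subset_closure (s := Metric.ball (0:ℂ) 1) _ hc continuousOn_const
        Metric.ball_subset_closedBall hcl.ge
      intro y hy
      simp [hw y hy, hw0]
    exact this hz
  · set K : Set ℂ := Metric.closedBall (0:ℂ) 1 ∩ G ⁻¹' {w | w.im = 0 ∧ w.re ≤ 0} with hK
    have hclosed : IsClosed {w : ℂ | w.im = 0 ∧ w.re ≤ 0} :=
      (isClosed_eq Complex.continuous_im continuous_const).inter
        (isClosed_le Complex.continuous_re continuous_const)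
    have hKc : IsCompact K :=
      (isCompact_closedBall (0:ℂ) 1).of_isClosed_subset
        (hc.preimage_isClosed_of_isClosed Metric.isClosed_closedBall hclosed)
        Set.inter_subset_left
    have h0K : (0:ℂ) ∈ K := by
      refine ⟨by simp, ?_⟩
      simp [h0]
    obtain ⟨z, hzK, hmin⟩ := hKc.exists_isMinOn ⟨0, h0K⟩ (f := fun z => (G z).re)
      (Complex.continuous_re.comp_continuousOn (hc.mono Set.inter_subset_left))
    -- an interior minimum point
    have hint : ∃ y ∈ Metric.ball (0:ℂ) 1, G y = G z := by
      by_cases hz1 : ‖z‖ = 1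
      · refine ⟨0, by simp, ?_⟩
        have h1 : ¬ (G z).re < 0 := fun h => hcon z hz1 h hzK.2.1
        have h2 := hzK.2.2
        apply Complex.ext
        · rw [h0]; simp; linarith
        · rw [h0, hzK.2.1]; simp
      · refine ⟨z, ?_, rfl⟩
        have := hzK.1
        rw [mem_closedBall_zero_iff] at this
        rw [mem_ball_zero_iff]
        exact lt_of_le_of_ne this hz1
    obtain ⟨y, hy, hyz⟩ := hint
    have hO := hopen _ subset_rfl Metric.isOpen_ball
    have hmem : G z ∈ G '' Metric.ball 0 1 := ⟨y, hy, hyz⟩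
    obtain ⟨ε, hε, hsub⟩ := Metric.isOpen_iff.1 hO _ hmem
    have hm : G z - ((ε / 2 : ℝ) : ℂ) ∈ Metric.ball (G z) ε := by
      rw [Metric.mem_ball, dist_eq_norm, sub_sub_cancel_left, norm_neg, Complex.norm_real,
        Real.norm_eq_abs, abs_of_pos (by positivity)]
      linarith
    obtain ⟨x, hx, hxe⟩ := hsub hm
    have hre : (G x).re = (G z).re - ε / 2 := by
      rw [hxe, Complex.sub_re, Complex.ofReal_re]
    have him : (G x).im = 0 := by
      rw [hxe, Complex.sub_im, Complex.ofReal_im, hzK.2.1, sub_zero]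
    have hxK : x ∈ K := by
      refine ⟨Metric.ball_subset_closedBall hx, him, ?_⟩
      have := hzK.2.2
      linarith
    have hle : (G z).re ≤ (G x).re := hmin hxK
    linarith

lemma hb_deriv_per (f : ℝ → ℝ) (hper : ∀ θ : ℝ, f (θ + 2 * π) = f θ) (θ : ℝ) :
    deriv f (θ + 2 * π) = deriv f θ := by
  rw [← deriv_comp_add_const]
  congr 1
  funext x
  exact hper x

lemma hb_smooth (f : ℝ → ℝ) (hf : ContDiff ℝ (⊤ : ℕ∞) f) :
    ContDiff ℝ (⊤ : ℕ∞) (deriv f) :=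
  (contDiff_infty_iff_deriv.1 hf).2

lemma hb_exp_hasDeriv (a : ℂ) (x : ℝ) :
    HasDerivAt (fun t : ℝ => Complex.exp (a * (t : ℂ))) (Complex.exp (a * (x:ℂ)) * a) x := by
  have h : HasDerivAt (fun t : ℂ => Complex.exp (a * t)) (Complex.exp (a * (x:ℂ)) * (a * 1)) (x:ℂ) :=
    ((hasDerivAt_id (x:ℂ)).const_mul a).cexp
  rw [mul_one] at h
  exact h.comp_ofReal

lemma hb_coeff_deriv (f : ℝ → ℝ) (hf : ContDiff ℝ (⊤ : ℕ∞) f)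
    (hper : ∀ θ : ℝ, f (θ + 2 * π) = f θ) (n : ℤ) :
    fourierC (deriv f) n = Complex.I * n * fourierC f n := by
  unfold fourierC
  have hdf : Continuous (deriv f) := (hb_smooth f hf).continuous
  have key := intervalIntegral.integral_mul_deriv_eq_deriv_mul (a := 0) (b := 2 * π)
    (u := fun θ : ℝ => Complex.exp (-Complex.I * (n : ℂ) * (θ : ℂ)))
    (u' := fun θ : ℝ => Complex.exp (-Complex.I * (n : ℂ) * (θ : ℂ)) * (-Complex.I * (n : ℂ)))
    (v := fun θ : ℝ => (f θ : ℂ)) (v' := fun θ : ℝ => ((deriv f θ : ℝ) : ℂ))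
    (fun x _ => hb_exp_hasDeriv _ x)
    (fun x _ => (hf.differentiable (by simp) x).hasDerivAt.ofReal_comp)
    (Continuous.intervalIntegrable (by fun_prop) _ _)
    (Continuous.intervalIntegrable (by fun_prop) _ _)
  have hb : f (2 * π) = f 0 := by simpa using hper 0
  have he : Complex.exp (-Complex.I * (n : ℂ) * ((2 * π : ℝ) : ℂ)) = 1 := by
    rw [Complex.exp_eq_one_iff]
    refine ⟨-n, ?_⟩
    push_cast
    ring
  simp only [he, hb] at key
  simp only [Complex.ofReal_zero, mul_zero, Complex.exp_zero, sub_self, zero_sub] at key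
  have e1 : (∫ θ in (0:ℝ)..(2 * π), ((deriv f θ : ℝ) : ℂ) *
      Complex.exp (-Complex.I * (n : ℂ) * (θ : ℂ))) =
      ∫ θ in (0:ℝ)..(2 * π), Complex.exp (-Complex.I * (n : ℂ) * (θ : ℂ)) *
        ((deriv f θ : ℝ) : ℂ) := by
    congr 1; funext θ; ring
  have e2 : (∫ θ in (0:ℝ)..(2 * π), Complex.exp (-Complex.I * (n : ℂ) * (θ : ℂ)) *
      (-Complex.I * (n : ℂ)) * (f θ : ℂ)) = (-Complex.I * (n : ℂ)) *
      ∫ θ in (0:ℝ)..(2 * π), (f θ : ℂ) * Complex.exp (-Complex.I * (n : ℂ) * (θ : ℂ)) := by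
    rw [← intervalIntegral.integral_const_mul]
    congr 1; funext θ; ring
  rw [e1, key, e2]
  ring

lemma hb_norm_exp (n : ℤ) (θ : ℝ) : ‖Complex.exp (Complex.I * (n : ℂ) * (θ : ℂ))‖ = 1 := by
  have : Complex.I * (n : ℂ) * (θ : ℂ) = ((n * θ : ℝ) : ℂ) * Complex.I := by push_cast; ring
  rw [this, Complex.norm_exp_ofReal_mul_I]

lemma hb_coeff_bdd (f : ℝ → ℝ) (hf : Continuous f) : ∃ M : ℝ, ∀ n, ‖fourierC f n‖ ≤ M := by
  obtain ⟨C, hC⟩ := (isCompact_uIcc (a := (0:ℝ)) (b := 2 * π)).exists_bound_of_continuousOn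
    hf.continuousOn
  refine ⟨‖(1 / (2 * π) : ℂ)‖ * (C * |2 * π - 0|), fun n => ?_⟩
  unfold fourierC
  rw [norm_mul]
  gcongr
  apply intervalIntegral.norm_integral_le_of_norm_le_const
  intro x hx
  have h1 := hb_norm_exp (-n) x
  have h2 : Complex.I * ((-n : ℤ) : ℂ) * (x:ℂ) = -Complex.I * (n : ℂ) * (x : ℂ) := by
    push_cast; ring
  rw [h2] at h1
  rw [norm_mul, h1, mul_one, Complex.norm_real]
  exact hC x (Set.uIoc_subset_uIcc hx)

lemma hb_summable (f : ℝ → ℝ) (hf : ContDiff ℝ (⊤ : ℕ∞) f)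
    (hper : ∀ θ : ℝ, f (θ + 2 * π) = f θ) :
    Summable (fun n : ℤ => ‖fourierC f n‖) := by
  have hf1 := hb_smooth f hf
  have hf2 := hb_smooth _ hf1
  obtain ⟨M, hM⟩ := hb_coeff_bdd _ hf2.continuous
  have hs : Summable (fun n : ℤ => M * (1 / (n:ℝ) ^ 2)) :=
    (Real.summable_one_div_int_pow.2 one_lt_two).mul_left M
  refine Summable.of_norm_bounded_eventually hs ?_
  have : ({0} : Set ℤ)ᶜ ∈ Filter.cofinite := (Set.finite_singleton 0).compl_mem_cofinite
  filter_upwards [this] with n hn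
  have hn0 : (n:ℝ) ≠ 0 := by exact_mod_cast hn
  have h := hM n
  rw [hb_coeff_deriv _ hf1 (hb_deriv_per f hper), hb_coeff_deriv f hf hper] at h
  simp only [norm_mul, Complex.norm_I, one_mul, Complex.norm_intCast] at h
  have h' : (n:ℝ) ^ 2 * ‖fourierC f n‖ ≤ M := by
    rw [← sq_abs]; nlinarith
  rw [norm_norm, mul_one_div, le_div_iff₀ (by positivity)]
  linarith

lemma hb_series (f : ℝ → ℝ) (hf : ContDiff ℝ (⊤ : ℕ∞) f)
    (hper : ∀ θ : ℝ, f (θ + 2 * π) = f θ) (θ : ℝ) :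
    HasSum (fun n : ℤ => fourierC f n * Complex.exp (Complex.I * (n : ℂ) * (θ : ℂ))) (f θ : ℂ) := by
  have : Fact (0 < 2 * π) := ⟨by positivity⟩
  have hp : Function.Periodic (fun x : ℝ => (f x : ℂ)) (2 * π) := fun x => by simp [hper]
  have hcont : Continuous (fun x : ℝ => (f x : ℂ)) :=
    Complex.continuous_ofReal.comp hf.continuous
  let F : C(AddCircle (2 * π), ℂ) := ⟨hp.lift, continuous_coinduced_dom.mpr hcont⟩
  have hF : ∀ x : ℝ, F (x : AddCircle (2 * π)) = (f x : ℂ) := fun x => rfl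
  have hpi : (π : ℂ) ≠ 0 := by exact_mod_cast Real.pi_ne_zero
  have hco : ∀ n, fourierCoeff F n = fourierC f n := by
    intro n
    rw [fourierCoeff_eq_intervalIntegral F n 0, fourierC, zero_add, Complex.real_smul]
    push_cast
    congr 1
    apply intervalIntegral.integral_congr
    intro x _
    simp only [hF]
    rw [fourier_coe_apply, smul_eq_mul, mul_comm]
    congr 2
    push_cast
    field_simp
  have hs : Summable (fourierCoeff F) := by
    apply Summable.of_norm
    simp_rw [hco]
    exact hb_summable f hf hper
  have h := has_pointwise_sum_fourier_series_of_summable hs (θ : AddCircle (2 * π))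
  rw [hF] at h
  convert h using 2 with n
  rw [hco, fourier_coe_apply, smul_eq_mul]
  congr 2
  push_cast
  field_simp

lemma hb_coeff_neg (f : ℝ → ℝ) (n : ℤ) :
    fourierC f (-n) = (starRingEnd ℂ) (fourierC f n) := by
  unfold fourierC
  rw [map_mul, intervalIntegral.integral_of_le (by positivity),
    intervalIntegral.integral_of_le (by positivity), ← integral_conj]
  congr 1
  · have h : (1 / (2 * π) : ℂ) = ((1 / (2 * π) : ℝ) : ℂ) := by push_cast; ring
    rw [h, Complex.conj_ofReal]
  · congr 1
    funext θ
    rw [map_mul, ← Complex.exp_conj]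
    simp

lemma hb_exp_neg (n : ℤ) (θ : ℝ) :
    Complex.exp (Complex.I * ((-n : ℤ) : ℂ) * (θ : ℂ)) =
      (starRingEnd ℂ) (Complex.exp (Complex.I * (n : ℂ) * (θ : ℂ))) := by
  rw [← Complex.exp_conj]
  simp

/-- Folding a conjugate-symmetric series over `ℤ` onto `ℕ`. -/
lemma hb_fold (b : ℤ → ℂ) (h0 : b 0 = 0) (hneg : ∀ n, b (-n) = (starRingEnd ℂ) (b n))
    (S : ℂ) (hS : HasSum (fun n : ℕ => b n) S) : HasSum b (S + (starRingEnd ℂ) S) := by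
  have h2 : HasSum (fun n : ℕ => b (-(n:ℤ))) ((starRingEnd ℂ) S) := by
    simp_rw [hneg]
    exact Complex.hasSum_conj'.2 hS
  have := hS.of_nat_of_neg h2
  rwa [h0, sub_zero] at this

theorem exists_point_deriv_neg_hilbert_deriv_zero (f : ℝ → ℝ)
    (hf : ContDiff ℝ (⊤ : ℕ∞) f)
    (hper : ∀ θ : ℝ, f (θ + 2 * π) = f θ)
    (hmean : (∫ θ in (0:ℝ)..(2 * π), f θ) = 0)
    (hnonconst : ∃ a b : ℝ, f a ≠ f b) :
    ∃ θ₀ : ℝ, deriv f θ₀ < 0 ∧ deriv (fun x => hilbertT f x) θ₀ = 0 := by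
  have hf1 := hb_smooth f hf
  have hper1 := hb_deriv_per f hper
  have hsum0 := hb_summable f hf hper
  have hsum1 := hb_summable _ hf1 hper1
  set d : ℤ → ℂ := fourierC (deriv f) with hd
  have hdn : ∀ n, d n = Complex.I * n * fourierC f n := hb_coeff_deriv f hf hper
  have hd0 : d 0 = 0 := by simp [hdn]
  have hsumN : Summable (fun n : ℕ => ‖d n‖) :=
    hsum1.comp_injective Nat.cast_injective
  set G : ℂ → ℂ := fun z => ∑' n : ℕ, 2 * (d n * z ^ n) with hG
  have hbound : ∀ (n : ℕ) (z : ℂ), ‖z‖ ≤ 1 → ‖2 * (d n * z ^ n)‖ ≤ 2 * ‖d n‖ := by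
    intro n z hz
    rw [norm_mul, norm_mul, norm_pow, Complex.norm_ofNat]
    have : ‖z‖ ^ n ≤ 1 := pow_le_one₀ (norm_nonneg _) hz
    nlinarith [norm_nonneg (d n), mul_le_mul_of_nonneg_left this (norm_nonneg (d n))]
  have hGc : ContinuousOn G (Metric.closedBall 0 1) :=
    continuousOn_tsum (fun n => by fun_prop) (hsumN.mul_left 2)
      (fun n z hz => hbound n z (by simpa using hz))
  have hGd : DifferentiableOn ℂ G (Metric.ball 0 1) :=
    Complex.differentiableOn_tsum_of_summable_norm (hsumN.mul_left 2)
      (fun n => by fun_prop) Metric.isOpen_ball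
      (fun n z hz => hbound n z (by simpa using (mem_ball_zero_iff.1 hz).le))
  have hG0 : G 0 = 0 := by
    rw [hG]
    simp only
    have : ∀ n : ℕ, 2 * (d n * (0:ℂ) ^ n) = 0 := by
      intro n
      rcases Nat.eq_zero_or_pos n with h | h
      · simp [h, hd0]
      · simp [h.ne']
    simp [this]
  -- boundary values
  have hpow : ∀ (n : ℕ) (θ : ℝ), Complex.exp (Complex.I * ((n : ℤ) : ℂ) * (θ : ℂ)) =
      Complex.exp (θ * Complex.I) ^ n := by
    intro n θ
    rw [← Complex.exp_nat_mul]
    congr 1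
    push_cast
    ring
  have hSN : ∀ θ : ℝ, HasSum (fun n : ℕ => d n * Complex.exp (Complex.I * ((n : ℤ) : ℂ) * (θ : ℂ)))
      (G (Complex.exp (θ * Complex.I)) / 2) := by
    intro θ
    have hs : Summable (fun n : ℕ => d n * Complex.exp (Complex.I * ((n : ℤ) : ℂ) * (θ : ℂ))) := by
      apply Summable.of_norm
      simpa only [norm_mul, hb_norm_exp, mul_one] using hsumN
    convert hs.hasSum using 1
    rw [hG]
    simp only [hpow]
    rw [tsum_mul_left]
    ring
  have hre : ∀ θ : ℝ, deriv f θ = (G (Complex.exp (θ * Complex.I))).re := by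
    intro θ
    have h1 := hb_series _ hf1 hper1 θ
    have h2 := hb_fold (fun n : ℤ => d n * Complex.exp (Complex.I * (n : ℂ) * (θ : ℂ)))
      (by simp [hd0]) (fun n => by
        rw [hb_exp_neg, hd, hb_coeff_neg, map_mul]) _ (hSN θ)
    have h3 := congrArg Complex.re (h1.unique h2)
    rw [Complex.ofReal_re] at h3
    rw [h3, Complex.add_re, Complex.conj_re]
    have : (G (Complex.exp (θ * Complex.I)) / 2).re = (G (Complex.exp (θ * Complex.I))).re / 2 := by
      simp
    rw [this]; ring
  have him : ∀ θ : ℝ, deriv (fun x => hilbertT f x) θ = (G (Complex.exp (θ * Complex.I))).im := by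
    intro θ
    have hsg : ∀ n : ℤ, ‖((n.sign : ℤ) : ℂ)‖ ≤ 1 := by
      intro n
      rcases lt_trichotomy n 0 with h | h | h
      · simp [Int.sign_eq_neg_one_of_neg h]
      · simp [h]
      · simp [Int.sign_eq_one_of_pos h]
    have hD : HasDerivAt (fun x : ℝ => ∑' n : ℤ, -Complex.I * ((n.sign : ℤ) : ℂ) * fourierC f n *
        Complex.exp (Complex.I * (n : ℂ) * (x : ℂ)))
        (∑' n : ℤ, -Complex.I * ((n.sign : ℤ) : ℂ) * (d n *
        Complex.exp (Complex.I * (n : ℂ) * (θ : ℂ)))) θ := by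
      refine hasDerivAt_tsum (y₀ := 0) (g' := fun (n : ℤ) (x : ℝ) =>
        -Complex.I * ((n.sign : ℤ) : ℂ) * (d n *
        Complex.exp (Complex.I * (n : ℂ) * (x : ℂ)))) hsum1 ?_ ?_ ?_ θ
      · intro n y
        have := (hb_exp_hasDeriv (Complex.I * n) y).const_mul
          (-Complex.I * ((n.sign : ℤ) : ℂ) * fourierC f n)
        have e : -Complex.I * ((n.sign : ℤ) : ℂ) * fourierC f n *
            (Complex.exp (Complex.I * n * y) * (Complex.I * n)) =
            -Complex.I * ((n.sign : ℤ) : ℂ) * (d n * Complex.exp (Complex.I * (n : ℂ) * (y : ℂ))) := by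
          rw [hdn]; ring
        rw [e] at this
        exact this
      · intro n y
        rw [norm_mul, norm_mul, norm_mul, hb_norm_exp, norm_neg, Complex.norm_I, one_mul, mul_one]
        exact mul_le_of_le_one_left (norm_nonneg _) (hsg n)
      · apply Summable.of_norm_bounded hsum0
        intro n
        rw [norm_mul, norm_mul, norm_mul, hb_norm_exp, norm_neg, Complex.norm_I, one_mul, mul_one]
        exact mul_le_of_le_one_left (norm_nonneg _) (hsg n)
    have hS := (hSN θ).mul_left (-Complex.I)
    have h2 := hb_fold (fun n : ℤ => -Complex.I * ((n.sign : ℤ) : ℂ) * (d n *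
        Complex.exp (Complex.I * (n : ℂ) * (θ : ℂ)))) (by simp) (fun n => by
          rw [hb_exp_neg, hd, hb_coeff_neg]
          simp [Int.sign_neg]) (-Complex.I * (G (Complex.exp (θ * Complex.I)) / 2)) (by
          have e : (fun n : ℕ => -Complex.I * (((n:ℤ).sign : ℤ) : ℂ) * (d n *
              Complex.exp (Complex.I * ((n:ℤ) : ℂ) * (θ : ℂ)))) =
              fun n : ℕ => -Complex.I * (d n *
              Complex.exp (Complex.I * ((n:ℤ) : ℂ) * (θ : ℂ))) := by
            funext n
            rcases Nat.eq_zero_or_pos n with h | h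
            · simp [h, hd0]
            · rw [Int.sign_eq_one_of_pos (by exact_mod_cast h)]
              simp
          rw [e]
          exact hS)
    rw [h2.tsum_eq] at hD
    have hR : HasDerivAt (fun x => hilbertT f x) _ θ :=
      (Complex.reCLM.hasFDerivAt.comp_hasDerivAt θ hD)
    rw [hR.deriv]
    rw [Complex.reCLM_apply, Complex.add_re, Complex.conj_re]
    have : (-Complex.I * (G (Complex.exp (θ * Complex.I)) / 2)).re =
        (G (Complex.exp (θ * Complex.I))).im / 2 := by
      simp
    rw [this]; ring
  have hne : ∃ z ∈ Metric.closedBall (0:ℂ) 1, G z ≠ 0 := by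
    by_contra hcon
    push Not at hcon
    obtain ⟨a, b, hab⟩ := hnonconst
    apply hab
    apply is_const_of_deriv_eq_zero (hf.differentiable (by simp))
    intro x
    rw [hre, hcon _ (by simp [Complex.norm_exp_ofReal_mul_I])]
    simp
  obtain ⟨z, hz, h1, h2⟩ := hb_core G hGc hGd hG0 hne
  have hze : Complex.exp ((Complex.arg z : ℝ) * Complex.I) = z := by
    have := Complex.norm_mul_exp_arg_mul_I z
    rwa [hz, Complex.ofReal_one, one_mul] at this
  exact ⟨Complex.arg z, by rw [hre, hze]; exact h1, by rw [him, hze]; exact h2⟩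
end

section
/- Let u : S¹ → ℝ be a smooth function with Fourier series u(θ) = Σ_{n∈ℤ} c_n e^{inθ} and c₀ = 0, and let F = −u·u″ − H(u·H(u″)). Then for every θ ∈ S¹, F(θ) = 2 Σ_{n=1}^∞ (2n−1) |φ_n(θ)|², where φ_n(θ) = Σ_{m=n}^∞ c_m e^{imθ}. -/
open MeasureTheory Real

/-- The function `F = −u·u″ − H(u·H(u″))`. -/
noncomputable def Fmagic (u : ℝ → ℝ) (θ : ℝ) : ℝ :=
  -(u θ * deriv (deriv u) θ) - hilbertT (fun x => u x * hilbertT (deriv (deriv u)) x) θ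

noncomputable def ee (n : ℤ) (θ : ℝ) : ℂ := Complex.exp (Complex.I * (n : ℂ) * (θ : ℂ))

lemma ee_add (a b : ℤ) (θ : ℝ) : ee (a + b) θ = ee a θ * ee b θ := by
  unfold ee
  rw [← Complex.exp_add]; congr 1; push_cast; ring

lemma ee_norm (a : ℤ) (θ : ℝ) : ‖ee a θ‖ = 1 := by
  unfold ee
  rw [show Complex.I * (a : ℂ) * (θ : ℂ) = ((a * θ : ℝ) : ℂ) * Complex.I by push_cast; ring]
  exact Complex.norm_exp_ofReal_mul_I _

lemma ee_conj (a : ℤ) (θ : ℝ) : (starRingEnd ℂ) (ee a θ) = ee (-a) θ := by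
  unfold ee
  rw [← Complex.exp_conj]; congr 1; simp

lemma ee_zero (θ : ℝ) : ee 0 θ = 1 := by simp [ee]

lemma ee_continuous (a : ℤ) : Continuous (ee a) := by
  unfold ee; fun_prop

lemma ee_two_pi (a : ℤ) : ee a (2 * π) = 1 := by
  unfold ee
  rw [Complex.exp_eq_one_iff]
  exact ⟨a, by push_cast; ring⟩

lemma ee_hasDerivAt (n : ℤ) (x : ℝ) : HasDerivAt (ee n) (Complex.I * n * ee n x) x := by
  have h : HasDerivAt (fun y : ℝ => Complex.I * (n : ℂ) * (y : ℂ)) (Complex.I * n * 1) x :=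
    (Complex.ofRealCLM.hasDerivAt (x := x)).const_mul _
  have := h.cexp
  unfold ee
  convert this using 1
  ring

lemma fourierC_eq (f : ℝ → ℝ) (n : ℤ) :
    fourierC f n = (1 / (2 * π)) * ∫ θ in (0:ℝ)..(2 * π), (f θ : ℂ) * ee (-n) θ := by
  unfold fourierC ee
  congr 2
  ext θ
  congr 2
  push_cast; ring

lemma integral_ee (n : ℤ) : ∫ θ in (0:ℝ)..(2 * π), ee n θ = if n = 0 then (2 * π : ℂ) else 0 := by
  split_ifs with h
  · subst h; simp [ee]
  · have hn : (Complex.I * (n : ℂ)) ≠ 0 := by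
      simpa using h
    have := integral_exp_mul_complex (a := 0) (b := 2 * π) hn
    have h2 := ee_two_pi n
    unfold ee at *
    rw [this, h2]; simp

lemma fourierC_conj (f : ℝ → ℝ) (n : ℤ) : (starRingEnd ℂ) (fourierC f n) = fourierC f (-n) := by
  rw [fourierC_eq, fourierC_eq, map_mul, ← intervalIntegral.intervalIntegral_conj]
  congr 1
  · rw [show (1 / (2 * π) : ℂ) = ((1 / (2 * π) : ℝ) : ℂ) by push_cast; rfl, Complex.conj_ofReal]
  · congr 1; ext θ; simp [ee_conj]

lemma fourierC_deriv (f : ℝ → ℝ) (hf : ContDiff ℝ 1 f) (hper : ∀ θ : ℝ, f (θ + 2 * π) = f θ)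
    (n : ℤ) : fourierC (deriv f) n = Complex.I * n * fourierC f n := by
  rw [fourierC_eq, fourierC_eq]
  have hd : Differentiable ℝ f := hf.differentiable (by norm_num)
  have hc : Continuous (deriv f) := hf.continuous_deriv (by norm_num)
  have key := intervalIntegral.integral_mul_deriv_eq_deriv_mul (a := 0) (b := 2 * π)
    (u := ee (-n)) (v := fun x => (f x : ℂ)) (u' := fun x => Complex.I * ((-n : ℤ) : ℂ) * ee (-n) x)
    (v' := fun x => ((deriv f x : ℝ) : ℂ))
    (fun x _ => ee_hasDerivAt _ _) (fun x _ => (hd x).hasDerivAt.ofReal_comp)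
    ((continuous_const.mul (ee_continuous _)).intervalIntegrable _ _)
    ((Complex.continuous_ofReal.comp hc).intervalIntegrable _ _)
  have h0 : f (2 * π) = f 0 := by simpa using hper 0
  rw [ee_two_pi, h0, show ee (-n) 0 = 1 by simp [ee], sub_self, zero_sub] at key
  simp only [mul_comm ((_ : ℝ) : ℂ) (ee _ _)]
  rw [key]
  simp only [mul_assoc]
  rw [intervalIntegral.integral_const_mul, intervalIntegral.integral_const_mul]
  push_cast; ring

lemma periodic_deriv (f : ℝ → ℝ) (hper : ∀ θ : ℝ, f (θ + 2 * π) = f θ) :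
    ∀ θ : ℝ, deriv f (θ + 2 * π) = deriv f θ := by
  intro θ
  rw [← deriv_comp_add_const]
  congr 1; ext x; exact hper x

lemma fourierC_bound (f : ℝ → ℝ) : ∃ C, ∀ n, ‖fourierC f n‖ ≤ C := by
  refine ⟨‖(1 / (2 * π) : ℂ)‖ * ∫ θ in (0:ℝ)..(2 * π), |f θ|, fun n => ?_⟩
  rw [fourierC_eq, norm_mul]
  gcongr
  refine (intervalIntegral.norm_integral_le_integral_norm (by positivity)).trans (le_of_eq ?_)
  congr 1; ext θ; simp [ee_norm]

lemma fourierC_hasSum (f : ℝ → ℝ) (hf : Continuous f) (hper : ∀ θ : ℝ, f (θ + 2 * π) = f θ)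
    (hs : Summable (fourierC f)) (θ : ℝ) : HasSum (fun n => fourierC f n * ee n θ) (f θ : ℂ) := by
  have : Fact (0 < 2 * π) := ⟨by positivity⟩
  have hp : Function.Periodic (fun x => (f x : ℂ)) (2 * π) := fun x => by simp [hper]
  let g : C(AddCircle (2 * π), ℂ) := ⟨hp.lift, by
    apply continuous_coinduced_dom.mpr
    exact Complex.continuous_ofReal.comp hf⟩
  have hg : ∀ x : ℝ, g (x : AddCircle (2 * π)) = (f x : ℂ) := fun x => rfl
  have he : ∀ (n : ℤ) (x : ℝ), fourier n (x : AddCircle (2 * π)) = ee n x := by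
    intro n x
    rw [fourier_coe_apply, ee]
    congr 1
    push_cast
    have : (π : ℂ) ≠ 0 := by exact_mod_cast pi_ne_zero
    field_simp
  have hcoef : fourierCoeff g = fourierC f := by
    ext n
    rw [fourierCoeff_eq_intervalIntegral _ _ 0, fourierC_eq, Complex.real_smul, zero_add]
    congr 1
    · simp
    · congr 1; ext x; rw [he, hg, smul_eq_mul, mul_comm]
  have := has_pointwise_sum_fourier_series_of_summable (f := g) (by rw [hcoef]; exact hs) (θ : AddCircle (2 * π))
  rw [hcoef] at this
  simpa only [he, hg, smul_eq_mul] using this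

lemma fourierC_of_hasSum (f : ℝ → ℝ) (d : ℤ → ℂ) (hd : Summable (fun n => ‖d n‖))
    (h : ∀ θ, HasSum (fun n => d n * ee n θ) (f θ : ℂ)) (n : ℤ) : fourierC f n = d n := by
  rw [fourierC_eq]
  have key := intervalIntegral.hasSum_integral_of_dominated_convergence
    (μ := volume) (a := 0) (b := 2 * π) (F := fun (m : ℤ) (θ : ℝ) => d m * ee m θ * ee (-n) θ)
    (f := fun θ => (f θ : ℂ) * ee (-n) θ)
    (fun m _ => ‖d m‖)
    (fun m => ((continuous_const.mul (ee_continuous _)).mul (ee_continuous _)).aestronglyMeasurable)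
    (fun m => Filter.Eventually.of_forall fun x _ => by simp [ee_norm])
    (Filter.Eventually.of_forall fun x _ => hd)
    (continuous_const.intervalIntegrable _ _)
    (Filter.Eventually.of_forall fun x _ => (h x).mul_right _)
  have h2 : (fun m : ℤ => ∫ θ in (0:ℝ)..(2 * π), d m * ee m θ * ee (-n) θ)
      = fun m => if m = n then d n * (2 * π) else 0 := by
    ext m
    simp only [mul_assoc, ← ee_add]
    rw [intervalIntegral.integral_const_mul, integral_ee]
    by_cases hmn : m = n
    · subst hmn; simp
    · rw [if_neg hmn, if_neg (by omega), mul_zero]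
  rw [h2] at key
  rw [key.unique (hasSum_ite_eq n _)]
  have : (π : ℂ) ≠ 0 := by exact_mod_cast pi_ne_zero
  field_simp

lemma decay (u : ℝ → ℝ) (hu : ContDiff ℝ (⊤ : ℕ∞) u)
    (hper : ∀ θ : ℝ, u (θ + 2 * π) = u θ) :
    Summable (fun n : ℤ => (n : ℝ) ^ 2 * ‖fourierC u n‖) ∧ Summable (fun n : ℤ => ‖fourierC u n‖) ∧
    (∀ n, fourierC (deriv (deriv u)) n = -(n : ℂ) ^ 2 * fourierC u n) ∧
    (∀ θ, HasSum (fun n => fourierC u n * ee n θ) (u θ : ℂ)) ∧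
    (∀ θ, HasSum (fun n : ℤ => -(n : ℂ) ^ 2 * fourierC u n * ee n θ) ((deriv (deriv u) θ : ℝ) : ℂ)) := by
  have hd : ∀ f : ℝ → ℝ, ContDiff ℝ (⊤ : ℕ∞) f → ContDiff ℝ (⊤ : ℕ∞) (deriv f) := by
    intro f hf
    exact (contDiff_infty_iff_deriv.mp hf).2
  have hF : ∀ f : ℝ → ℝ, ContDiff ℝ (⊤ : ℕ∞) f → (∀ θ : ℝ, f (θ + 2 * π) = f θ) →
      ∀ n, fourierC (deriv (deriv f)) n = -(n : ℂ) ^ 2 * fourierC f n := by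
    intro f hf hp n
    rw [fourierC_deriv _ ((hd f hf).of_le (by exact_mod_cast le_top)) (periodic_deriv f hp),
      fourierC_deriv _ (hf.of_le (by exact_mod_cast le_top)) hp]
    linear_combination (n : ℂ) ^ 2 * fourierC f n * Complex.I_sq
  have hu2 := hd _ (hd _ hu)
  have hp2 := periodic_deriv _ (periodic_deriv _ hper)
  obtain ⟨C, hC⟩ := fourierC_bound (deriv (deriv (deriv (deriv u))))
  have h4 : ∀ n : ℤ, (n : ℝ) ^ 4 * ‖fourierC u n‖ ≤ C := by
    intro n
    have := hC n
    rw [hF _ hu2 hp2, hF _ hu hper] at this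
    simp only [norm_mul, norm_neg, norm_pow, Complex.norm_intCast] at this
    rw [← mul_assoc, ← pow_add] at this
    rwa [Even.pow_abs (by decide)] at this
  have hC0 : 0 ≤ C := (norm_nonneg _).trans (hC 0)
  have hs2 : Summable (fun n : ℤ => (n : ℝ) ^ 2 * ‖fourierC u n‖) := by
    refine Summable.of_nonneg_of_le (fun n => by positivity) (fun n => ?_)
      ((Real.summable_one_div_int_pow (p := 2).mpr (by norm_num)).mul_left C)
    by_cases hn : n = 0
    · subst hn; simp
    · have hnr : (n : ℝ) ≠ 0 := by exact_mod_cast hn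
      rw [mul_one_div, le_div_iff₀ (by positivity)]
      calc _ = (n : ℝ) ^ 4 * ‖fourierC u n‖ := by ring
        _ ≤ C := h4 n
  have hs0 : Summable (fun n : ℤ => ‖fourierC u n‖) := by
    have h0 : Summable (fun n : ℤ => if n = 0 then ‖fourierC u 0‖ else 0) :=
      (hasSum_ite_eq 0 _).summable
    refine Summable.of_nonneg_of_le (fun n => by positivity) (fun n => ?_) (hs2.add h0)
    by_cases hn : n = 0
    · subst hn; simp
    · rw [if_neg hn, add_zero]
      have : (1 : ℝ) ≤ (n : ℝ) ^ 2 := by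
        have : (1 : ℤ) ≤ n ^ 2 := by have := sq_pos_of_ne_zero hn; omega
        exact_mod_cast this
      nlinarith [norm_nonneg (fourierC u n)]
  refine ⟨hs2, hs0, hF u hu hper, ?_, ?_⟩
  · exact fourierC_hasSum u hu.continuous hper hs0.of_norm
  · intro θ
    have := fourierC_hasSum _ hu2.continuous hp2 ?_ θ
    · simpa only [hF u hu hper] using this
    · apply Summable.of_norm
      simpa only [hF u hu hper, norm_mul, norm_neg, norm_pow, Complex.norm_intCast, sq_abs] using hs2

lemma hasSum_congr_cx {f g : ℤ → ℂ} {s : ℂ} (hf : HasSum f s) (h : ∀ b, g b = f b) :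
    HasSum g s := by
  rw [show g = f from funext h]; exact hf

lemma hasSum_mul_cx (f g : ℤ → ℂ) (s t : ℂ) (hf : HasSum f s) (hg : HasSum g t)
    (hfn : Summable (fun n => ‖f n‖)) (hgn : Summable (fun n => ‖g n‖)) :
    HasSum (fun p : ℤ × ℤ => f p.1 * g p.2) (s * t) := by
  rw [← hf.tsum_eq, ← hg.tsum_eq, tsum_mul_tsum_of_summable_norm hfn hgn]
  exact (summable_mul_of_summable_norm hfn hgn).hasSum

/-- product with the Hilbert transform -/
lemma hilbert_mul (f g : ℝ → ℝ) (c d : ℤ → ℂ) (hc : Summable (fun n => ‖c n‖))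
    (hd : Summable (fun n => ‖d n‖)) (hf : ∀ θ, HasSum (fun n => c n * ee n θ) (f θ : ℂ))
    (hg : ∀ θ, HasSum (fun n => d n * ee n θ) (g θ : ℂ)) (θ : ℝ) :
    hilbertT (fun x => f x * g x) θ =
      (∑' p : ℤ × ℤ, -Complex.I * (((p.1 + p.2).sign : ℤ) : ℂ) * (c p.1 * d p.2) *
        ee (p.1 + p.2) θ).re := by
  let E : ℤ × ℤ ≃ ℤ × ℤ := ⟨fun p => (p.1 - p.2, p.2), fun p => (p.1 + p.2, p.2),
    fun p => by simp, fun p => by simp⟩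
  have hcd : Summable (fun p : ℤ × ℤ => ‖c p.1 * d p.2‖) := hc.mul_norm hd
  have hcdE : Summable (fun p : ℤ × ℤ => ‖c (p.1 - p.2) * d p.2‖) := E.summable_iff.mpr hcd
  let K : ℤ → ℂ := fun k => ∑' b, c (k - b) * d b
  have hfib : ∀ k, Summable (fun b => ‖c (k - b) * d b‖) := fun k => hcdE.prod_factor k
  have hK : Summable (fun k => ‖K k‖) :=
    Summable.of_nonneg_of_le (fun _ => norm_nonneg _) (fun k => norm_tsum_le_tsum_norm (hfib k))
      hcdE.prod
  have hKs : ∀ x, HasSum (fun k => K k * ee k x) ((f x * g x : ℝ) : ℂ) := by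
    intro x
    have hnorm : ∀ (c : ℤ → ℂ), Summable (fun n => ‖c n‖) → Summable (fun n => ‖c n * ee n x‖) := by
      intro c hc; simpa [ee_norm] using hc
    have h1 : HasSum (fun p : ℤ × ℤ => (c p.1 * ee p.1 x) * (d p.2 * ee p.2 x))
      ((f x : ℂ) * (g x : ℂ)) := hasSum_mul_cx (fun n => c n * ee n x)
        (fun n => d n * ee n x) _ _ (hf x) (hg x) (hnorm c hc) (hnorm d hd)
    rw [← E.hasSum_iff] at h1
    have h3 : ∀ k, HasSum (fun b => c (k - b) * d b) (K k) := fun k =>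
      (Summable.of_norm (hfib k)).hasSum
    have h2 := h1.prod_fiberwise (g := fun k => K k * ee k x) (fun k => by
      have h4 := (h3 k).mul_right (ee k x)
      refine hasSum_congr_cx h4 (fun b => ?_)
      have h5 : ee k x = ee (k - b) x * ee b x := by rw [← ee_add, sub_add_cancel]
      rw [h5]
      simp only [Function.comp, E, Equiv.coe_fn_mk]
      ring)
    rw [Complex.ofReal_mul]; exact h2
  have hco : ∀ k, fourierC (fun x => f x * g x) k = K k := fourierC_of_hasSum _ K hK hKs
  unfold hilbertT
  congr 1
  have hS : Summable (fun p : ℤ × ℤ => -Complex.I * (((p.1).sign : ℤ) : ℂ) *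
      (c (p.1 - p.2) * d p.2) * ee p.1 θ) := by
    apply Summable.of_norm
    refine Summable.of_nonneg_of_le (fun _ => norm_nonneg _) (fun p => ?_) hcdE
    rw [norm_mul, norm_mul, ee_norm, mul_one]
    apply mul_le_of_le_one_left (norm_nonneg _)
    rcases lt_trichotomy p.1 0 with h | h | h
    · simp [Int.sign_eq_neg_one_of_neg h]
    · simp [h]
    · simp [Int.sign_eq_one_of_pos h]
  rw [← E.tsum_eq]
  simp only [E, Equiv.coe_fn_mk, sub_add_cancel]
  rw [hS.tsum_prod]
  congr 1; ext k
  simp only []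
  rw [hco, tsum_mul_right, tsum_mul_left]
  rfl

lemma hilbert_real (f : ℝ → ℝ) (hs : Summable (fun n => ‖fourierC f n‖)) (θ : ℝ) :
    HasSum (fun n : ℤ => -Complex.I * ((n.sign : ℤ) : ℂ) * fourierC f n * ee n θ)
      (hilbertT f θ : ℂ) := by
  have hS : Summable (fun n : ℤ => -Complex.I * ((n.sign : ℤ) : ℂ) * fourierC f n * ee n θ) := by
    apply Summable.of_norm
    refine Summable.of_nonneg_of_le (fun _ => norm_nonneg _) (fun p => ?_) hs
    rw [norm_mul, norm_mul, ee_norm, mul_one]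
    apply mul_le_of_le_one_left (norm_nonneg _)
    rcases lt_trichotomy p 0 with h | h | h
    · simp [Int.sign_eq_neg_one_of_neg h]
    · simp [h]
    · simp [Int.sign_eq_one_of_pos h]
  have hT : ((hilbertT f θ : ℝ) : ℂ) =
      ∑' n : ℤ, -Complex.I * ((n.sign : ℤ) : ℂ) * fourierC f n * ee n θ := by
    unfold hilbertT
    change (((∑' n : ℤ, -Complex.I * ((n.sign : ℤ) : ℂ) * fourierC f n * ee n θ).re : ℝ) : ℂ) = _
    rw [← Complex.conj_eq_iff_re, Complex.conj_tsum, ← (Equiv.neg ℤ).tsum_eq]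
    congr 1; ext n
    have := fourierC_conj f (-n)
    have h2 := ee_conj (-n) θ
    simp only [Equiv.neg_apply, map_mul, this, h2]
    simp
  rw [hT]; exact hS.hasSum

lemma sum_odd (N : ℕ) : ∑' n : ℕ, (if n ≤ N then (2 * (n : ℝ) + 1) else 0) = ((N : ℝ) + 1) ^ 2 := by
  rw [tsum_eq_sum (s := Finset.range (N + 1))]
  · have : ∀ M : ℕ, ∑ n ∈ Finset.range M, (2 * (n : ℝ) + 1) = (M : ℝ) ^ 2 := by
      intro M
      induction M with
      | zero => simp
      | succ k ih => rw [Finset.sum_range_succ, ih]; push_cast; ring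
    rw [show ((N : ℝ) + 1) ^ 2 = ((N + 1 : ℕ) : ℝ) ^ 2 by push_cast; ring, ← this]
    apply Finset.sum_congr rfl
    intro n hn
    rw [if_pos (by simpa [Nat.lt_succ_iff] using hn)]
  · intro n hn
    rw [if_neg (by simpa using hn)]

lemma tail_identity (x : ℕ → ℂ) (hx : Summable (fun p : ℕ => ((p : ℝ) + 1) ^ 2 * ‖x p‖)) :
    ((∑' n : ℕ, (2 * ((n : ℝ) + 1) - 1) * ‖∑' m : ℕ, x (n + m)‖ ^ 2 : ℝ) : ℂ) =
      ∑' p : ℕ × ℕ, (((min p.1 p.2 : ℕ) : ℂ) + 1) ^ 2 * (x p.1 * (starRingEnd ℂ) (x p.2)) := by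
  let G : (ℕ × ℕ) × ℕ → ℂ := fun z =>
    (((if z.2 ≤ min z.1.1 z.1.2 then (2 * (z.2 : ℝ) + 1) else 0) : ℝ) : ℂ) *
      (x z.1.1 * (starRingEnd ℂ) (x z.1.2))
  have hx0 : Summable (fun p : ℕ => ‖x p‖) := by
    refine Summable.of_nonneg_of_le (fun _ => norm_nonneg _) (fun p => ?_) hx
    apply le_mul_of_one_le_left (norm_nonneg _)
    apply one_le_pow₀; linarith [(Nat.cast_nonneg p : (0:ℝ) ≤ p)]
  have hfin : ∀ N : ℕ, Summable (fun n : ℕ => (if n ≤ N then (2 * (n : ℝ) + 1) else 0)) := by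
    intro N
    apply summable_of_ne_finset_zero (s := Finset.range (N + 1))
    intro n hn
    rw [if_neg (by simpa using hn)]
  have hGn : ∀ p n, ‖G (p, n)‖ = (if n ≤ min p.1 p.2 then (2 * (n : ℝ) + 1) else 0) *
      (‖x p.1‖ * ‖x p.2‖) := by
    intro p n
    simp only [G]
    rw [norm_mul, norm_mul, RCLike.norm_conj, Complex.norm_real, Real.norm_of_nonneg]
    split_ifs <;> positivity
  have hG : Summable G := by
    apply Summable.of_norm
    rw [summable_prod_of_nonneg (fun _ => norm_nonneg _)]
    simp only [hGn]
    refine ⟨fun p => (hfin _).mul_right _, ?_⟩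
    simp only [tsum_mul_right, sum_odd]
    have h2 : Summable (fun p : ℕ × ℕ => (((p.1 : ℝ) + 1) ^ 2 * ‖x p.1‖) * (((p.2 : ℝ) + 1) ^ 2 * ‖x p.2‖)) :=
      hx.mul_of_nonneg hx (fun _ => by positivity) (fun _ => by positivity)
    refine Summable.of_nonneg_of_le (fun _ => by positivity) (fun p => ?_) h2
    have h3 : (((min p.1 p.2 : ℕ) : ℝ) + 1) ^ 2 ≤ ((p.1 : ℝ) + 1) ^ 2 := by
      gcongr; exact min_le_left _ _
    have h4 : (1 : ℝ) ≤ ((p.2 : ℝ) + 1) ^ 2 := by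
      apply one_le_pow₀; linarith [(Nat.cast_nonneg p.2 : (0:ℝ) ≤ p.2)]
    calc _ ≤ ((p.1 : ℝ) + 1) ^ 2 * (‖x p.1‖ * ‖x p.2‖) := by gcongr
      _ = (((p.1 : ℝ) + 1) ^ 2 * (‖x p.1‖ * ‖x p.2‖)) * 1 := by ring
      _ ≤ (((p.1 : ℝ) + 1) ^ 2 * (‖x p.1‖ * ‖x p.2‖)) * ((p.2 : ℝ) + 1) ^ 2 := by gcongr
      _ = _ := by ring
  have hcomm := Summable.tsum_comm (f := fun (p : ℕ × ℕ) (n : ℕ) => G (p, n)) hG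
  have hR : ∀ p : ℕ × ℕ, ∑' n, G (p, n) =
      (((min p.1 p.2 : ℕ) : ℂ) + 1) ^ 2 * (x p.1 * (starRingEnd ℂ) (x p.2)) := by
    intro p
    simp only [G]
    rw [tsum_mul_right, ← Complex.ofReal_tsum, sum_odd]
    simp only [Complex.ofReal_pow, Complex.ofReal_add, Complex.ofReal_natCast, Complex.ofReal_one]
  have hL : ∀ n : ℕ, ∑' p : ℕ × ℕ, G (p, n) =
      (((2 * ((n : ℝ) + 1) - 1) * ‖∑' m : ℕ, x (n + m)‖ ^ 2 : ℝ) : ℂ) := by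
    intro n
    have hinj : Function.Injective (fun q : ℕ × ℕ => (n + q.1, n + q.2)) := by
      intro a b h
      simp only [Prod.mk.injEq, add_right_inj] at h
      exact Prod.ext h.1 h.2
    rw [← hinj.tsum_eq]
    · have hxn : Summable (fun m => ‖x (n + m)‖) := by
        have := (summable_nat_add_iff n).mpr hx0
        simpa only [add_comm] using this
      have hm := tsum_mul_tsum_of_summable_norm (f := fun m => x (n + m))
        (g := fun m => (starRingEnd ℂ) (x (n + m))) hxn (by simpa only [RCLike.norm_conj] using hxn)
      have : ∀ q : ℕ × ℕ, G ((n + q.1, n + q.2), n) =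
          (2 * (n : ℂ) + 1) * (x (n + q.1) * (starRingEnd ℂ) (x (n + q.2))) := by
        intro q
        simp only [G]
        rw [if_pos (by simp)]
        push_cast; rfl
      simp only [this]
      rw [tsum_mul_left, ← hm, ← Complex.conj_tsum, Complex.mul_conj, Complex.normSq_eq_norm_sq]
      push_cast; ring
    · intro p hp
      by_cases h : n ≤ min p.1 p.2
      · rw [le_min_iff] at h
        exact ⟨(p.1 - n, p.2 - n), by ext <;> simp <;> omega⟩
      · exfalso; apply hp; simp only [G]; rw [if_neg h]; simp
  rw [Complex.ofReal_tsum]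
  simp only [← hL, ← hR]
  exact hcomm

lemma quadrant (T : ℤ × ℤ → ℂ) (hT : Summable T)
    (hsupp : ∀ a b, ¬ (0 < a ∧ b < 0) → ¬ (a < 0 ∧ 0 < b) → T (a, b) = 0) :
    ∑' p, T p = ∑' p : ℕ × ℕ,
      (T ((p.1 : ℤ) + 1, -((p.2 : ℤ) + 1)) + T (-((p.2 : ℤ) + 1), (p.1 : ℤ) + 1)) := by
  let g : (ℕ × ℕ) ⊕ (ℕ × ℕ) → ℤ × ℤ := Sum.elim (fun p => ((p.1 : ℤ) + 1, -((p.2 : ℤ) + 1)))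
    (fun p => (-((p.2 : ℤ) + 1), (p.1 : ℤ) + 1))
  have hg : Function.Injective g := by
    rintro (⟨a, b⟩ | ⟨a, b⟩) (⟨c, d⟩ | ⟨c, d⟩) h <;> simp only [g, Sum.elim_inl, Sum.elim_inr, Prod.mk.injEq] at h
    · congr 2 <;> omega
    · omega
    · omega
    · congr 2 <;> omega
  have hTg : Summable (T ∘ g) := hT.comp_injective hg
  have h1 : Summable ((T ∘ g) ∘ Sum.inl) := hTg.comp_injective Sum.inl_injective
  have h2 : Summable ((T ∘ g) ∘ Sum.inr) := hTg.comp_injective Sum.inr_injective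
  have := Summable.tsum_sum h1 h2
  rw [← hg.tsum_eq]
  · refine this.trans ?_
    exact (h1.tsum_add h2).symm
  · rintro ⟨a, b⟩ hab
    by_cases h : 0 < a ∧ b < 0
    · exact ⟨Sum.inl ((a - 1).toNat, (-b - 1).toNat), by ext <;> simp [g] <;> omega⟩
    by_cases hq : a < 0 ∧ 0 < b
    · exact ⟨Sum.inr ((b - 1).toNat, (-a - 1).toNat), by ext <;> simp [g] <;> omega⟩
    exact absurd (hsupp a b h hq) hab

lemma sign_kernel (a b : ℤ) (h1 : ¬ (0 < a ∧ b < 0)) (h2 : ¬ (a < 0 ∧ 0 < b)) :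
    b ^ 2 * (1 - (a + b).sign * b.sign) = 0 := by
  rcases lt_trichotomy b 0 with hb | hb | hb
  · rw [Int.sign_eq_neg_one_of_neg hb, Int.sign_eq_neg_one_of_neg (by omega)]; ring
  · subst hb; simp
  · rw [Int.sign_eq_one_of_pos hb, Int.sign_eq_one_of_pos (by omega)]; ring

lemma sign_min (p q : ℕ) :
    (-((q : ℤ) + 1)) ^ 2 * (1 - (((p : ℤ) + 1) + -((q : ℤ) + 1)).sign * (-((q : ℤ) + 1)).sign)
    + ((p : ℤ) + 1) ^ 2 * (1 - (-((q : ℤ) + 1) + ((p : ℤ) + 1)).sign * ((p : ℤ) + 1).sign)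
    = 2 * (((min p q : ℕ) : ℤ) + 1) ^ 2 := by
  rw [Int.sign_eq_neg_one_of_neg (a := -((q : ℤ) + 1)) (by omega),
    Int.sign_eq_one_of_pos (a := (p : ℤ) + 1) (by omega)]
  rcases lt_trichotomy p q with h | h | h
  · rw [min_eq_left h.le, Int.sign_eq_neg_one_of_neg (a := ((p : ℤ) + 1) + -((q : ℤ) + 1)) (by omega),
      Int.sign_eq_neg_one_of_neg (a := -((q : ℤ) + 1) + ((p : ℤ) + 1)) (by omega)]
    ring
  · subst h; simp; ring
  · rw [min_eq_right h.le, Int.sign_eq_one_of_pos (a := ((p : ℤ) + 1) + -((q : ℤ) + 1)) (by omega),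
      Int.sign_eq_one_of_pos (a := -((q : ℤ) + 1) + ((p : ℤ) + 1)) (by omega)]
    ring

lemma main_aux (u : ℝ → ℝ) (hu : ContDiff ℝ (⊤ : ℕ∞) u)
    (hper : ∀ θ : ℝ, u (θ + 2 * π) = u θ) (θ : ℝ) :
    Fmagic u θ = 2 * ∑' n : ℕ, (2 * ((n : ℝ) + 1) - 1) *
        ‖∑' m : ℕ, fourierC u (((n + m : ℕ) : ℤ) + 1) * ee (((n + m : ℕ) : ℤ) + 1) θ‖ ^ 2 := by
  obtain ⟨hs2, hs0, hco, hU, hU2⟩ := decay u hu hper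
  set c := fourierC u with hcdef
  have hcoN : ∀ n, ‖fourierC (deriv (deriv u)) n‖ = (n : ℝ) ^ 2 * ‖c n‖ := by
    intro n
    rw [hco, norm_mul, norm_neg, norm_pow, Complex.norm_intCast, sq_abs]
  have hcs : Summable (fun n => ‖fourierC (deriv (deriv u)) n‖) := by
    simpa only [hcoN] using hs2
  let d : ℤ → ℂ := fun n => -Complex.I * ((n.sign : ℤ) : ℂ) * fourierC (deriv (deriv u)) n
  have hd : Summable (fun n => ‖d n‖) := by
    refine Summable.of_nonneg_of_le (fun _ => norm_nonneg _) (fun p => ?_) hcs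
    simp only [d]
    rw [norm_mul]
    apply mul_le_of_le_one_left (norm_nonneg _)
    rcases lt_trichotomy p 0 with h | h | h
    · simp [Int.sign_eq_neg_one_of_neg h]
    · simp [h]
    · simp [Int.sign_eq_one_of_pos h]
  have hH := hilbert_mul u (hilbertT (deriv (deriv u))) c d hs0 hd hU
    (fun x => hilbert_real _ hcs x) θ
  -- the product of u with its second derivative
  let A : ℤ × ℤ → ℂ := fun p => (c p.1 * ee p.1 θ) * (-(p.2 : ℂ) ^ 2 * c p.2 * ee p.2 θ)
  let B : ℤ × ℤ → ℂ := fun p => -Complex.I * (((p.1 + p.2).sign : ℤ) : ℂ) * (c p.1 * d p.2) *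
        ee (p.1 + p.2) θ
  have hA0 : Summable A :=
    summable_mul_of_summable_norm (f := fun n => c n * ee n θ)
      (g := fun n : ℤ => -(n : ℂ) ^ 2 * c n * ee n θ)
      (by simpa [ee_norm] using hs0) (by simpa [ee_norm] using hs2)
  have hA : HasSum A ((u θ : ℂ) * ((deriv (deriv u) θ : ℝ) : ℂ)) :=
    hasSum_mul_cx (fun n => c n * ee n θ) (fun n : ℤ => -(n : ℂ) ^ 2 * c n * ee n θ) _ _
      (hU θ) (hU2 θ) (by simpa [ee_norm] using hs0) (by simpa [ee_norm] using hs2)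
  have hcd : Summable (fun p : ℤ × ℤ => ‖c p.1 * d p.2‖) := hs0.mul_norm hd
  have hB : Summable B := by
    apply Summable.of_norm
    refine Summable.of_nonneg_of_le (fun _ => norm_nonneg _) (fun p => ?_) hcd
    simp only [B]
    rw [norm_mul, norm_mul, ee_norm, mul_one]
    apply mul_le_of_le_one_left (norm_nonneg _)
    rcases lt_trichotomy (p.1 + p.2) 0 with h | h | h
    · simp [Int.sign_eq_neg_one_of_neg h]
    · simp [h]
    · simp [Int.sign_eq_one_of_pos h]
  let T : ℤ × ℤ → ℂ := fun p => ((p.2 ^ 2 * (1 - (p.1 + p.2).sign * p.2.sign) : ℤ) : ℂ) *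
    (c p.1 * c p.2 * ee (p.1 + p.2) θ)
  have hTAB : T = fun p => -A p - B p := by
    ext p
    simp only [T, A, B, d, hco, ee_add]
    push_cast
    linear_combination (-(p.2 : ℂ) ^ 2 * ((p.1 + p.2).sign : ℂ) * (p.2.sign : ℂ) * c p.1 * c p.2 * ee p.1 θ * ee p.2 θ) * Complex.I_sq
  have hTs : Summable T := by rw [hTAB]; exact hA0.neg.sub hB
  have hF : Fmagic u θ = (∑' p, T p).re := by
    unfold Fmagic
    rw [hH, hTAB, hA0.neg.tsum_sub hB, tsum_neg, hA.tsum_eq, ← Complex.ofReal_mul]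
    simp [B]
  rw [quadrant T hTs (by
    intro a b h1 h2
    simp only [T]
    rw [sign_kernel a b h1 h2]; simp)] at hF
  have htail := tail_identity (fun p => c ((p : ℤ) + 1) * ee ((p : ℤ) + 1) θ) (by
    have hinj : Function.Injective (fun p : ℕ => (p : ℤ) + 1) := by
      intro a b h; simpa using h
    have := hs2.comp_injective hinj
    refine this.congr (fun p => ?_)
    simp [ee_norm])
  rw [hF]
  have : ∀ p : ℕ × ℕ, T ((p.1 : ℤ) + 1, -((p.2 : ℤ) + 1)) + T (-((p.2 : ℤ) + 1), (p.1 : ℤ) + 1) =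
      2 * ((((min p.1 p.2 : ℕ) : ℂ) + 1) ^ 2 * ((c ((p.1 : ℤ) + 1) * ee ((p.1 : ℤ) + 1) θ) *
        (starRingEnd ℂ) (c ((p.2 : ℤ) + 1) * ee ((p.2 : ℤ) + 1) θ))) := by
    intro p
    have h := congrArg (fun z : ℤ => (z : ℂ)) (sign_min p.1 p.2)
    beta_reduce at h
    rw [map_mul, ee_conj, hcdef, fourierC_conj, ← hcdef]
    simp only [T]
    rw [ee_add ((p.1 : ℤ) + 1) (-((p.2 : ℤ) + 1)), ee_add (-((p.2 : ℤ) + 1)) ((p.1 : ℤ) + 1)]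
    rw [Int.cast_add, Int.cast_mul 2, Int.cast_pow, Int.cast_add ((min p.1 p.2 : ℕ) : ℤ),
      Int.cast_natCast, Int.cast_one, Int.cast_ofNat] at h
    linear_combination (c ((p.1 : ℤ) + 1) * ee ((p.1 : ℤ) + 1) θ *
      (c (-((p.2 : ℤ) + 1)) * ee (-((p.2 : ℤ) + 1)) θ)) * h
  simp only [this]
  rw [tsum_mul_left, ← htail]
  rw [← Complex.ofReal_ofNat, ← Complex.ofReal_mul, Complex.ofReal_re]

/-- For smooth mean-zero `u` with Fourier coefficients `cₙ`,
`F(θ) = 2 Σ_{n≥1} (2n−1) |φ_n(θ)|²` where `φ_n(θ) = Σ_{m≥n} c_m e^{imθ}`. -/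
theorem Fmagic_eq_tail_sum (u : ℝ → ℝ)
    (hu : ContDiff ℝ (⊤ : ℕ∞) u)
    (hper : ∀ θ : ℝ, u (θ + 2 * π) = u θ)
    (hmean : fourierC u 0 = 0) :
    ∀ θ : ℝ, Fmagic u θ =
      2 * ∑' n : ℕ, (2 * ((n : ℝ) + 1) - 1) *
        ‖∑' m : ℕ, fourierC u ((n : ℤ) + 1 + (m : ℤ)) *
          Complex.exp (Complex.I * (((n : ℕ) + 1 + (m : ℕ) : ℕ) : ℂ) * (θ : ℂ))‖ ^ 2 := by
  intro θ
  rw [main_aux u hu hper θ]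
  have : ∀ n m : ℕ, fourierC u (((n + m : ℕ) : ℤ) + 1) * ee (((n + m : ℕ) : ℤ) + 1) θ =
      fourierC u ((n : ℤ) + 1 + (m : ℤ)) *
          Complex.exp (Complex.I * (((n : ℕ) + 1 + (m : ℕ) : ℕ) : ℂ) * (θ : ℂ)) := by
    intro n m
    have h : (((n + m : ℕ) : ℤ) + 1) = (n : ℤ) + 1 + (m : ℤ) := by push_cast; ring
    rw [h]
    unfold ee
    push_cast
    rfl
  simp only [this]
end
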